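/- arXiv:math/0402330 — 2 statements merged into one kernel-verified Lean document; each statement's English description precedes it below -/
import Mathlib

section
/- Let S ⊆ M_N(W) be a finitely generated prime ∂_q-invariant subalgebra of Gel'fand–Kirillov dimension one such that the centralizer of k[p]·S in M_N(W) is the scalars k. Then there exists a matrix A ∈ M_N(k[p]) such that q + A lies in the center of S. -/
open Polynomial

set_option synthInstance.maxHeartbeats 1000000
set_option maxHeartbeats 1000000

noncomputable section

variable (k : Type*) [Field k] [CharZero k]

/-- The operator `p`: multiplication by `X` on `k[X]`. -/
def pOp : Module.End k (Polynomial k) := LinearMap.mulLeft k (X : Polynomial k)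

/-- The operator `q = d/dX` on `k[X]`. -/
def qOp : Module.End k (Polynomial k) := derivative

/-- The (first) Weyl algebra, realized concretely as the subalgebra of
`End_k(k[X])` generated by multiplication by `X` and `d/dX`.  (In characteristic
zero this is a faithful model of `k⟨p,q | qp - pq = 1⟩`.) -/
def WeylA : Subalgebra k (Module.End k (Polynomial k)) :=
  Algebra.adjoin k {pOp k, qOp k}

/-- The element `p` of the Weyl algebra. -/
def pW : WeylA k := ⟨pOp k, Algebra.subset_adjoin (Set.mem_insert _ _)⟩

/-- The element `q` of the Weyl algebra. -/
def qW : WeylA k := ⟨qOp k, Algebra.subset_adjoin (Set.mem_insert_of_mem _ rfl)⟩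

variable (N : ℕ)

/-- `M_N(W)`, the `N×N` matrices over the Weyl algebra. -/
abbrev MW := Matrix (Fin N) (Fin N) (WeylA k)

/-- The scalar matrix `p·Id_N`. -/
def pM : MW k N := Matrix.diagonal fun _ => pW k

/-- The scalar matrix `q·Id_N`. -/
def qM : MW k N := Matrix.diagonal fun _ => qW k

/-- The derivation `∂_q(a) = [a,p]` on `M_N(W)`. -/
def dq (a : MW k N) : MW k N := a * pM k N - pM k N * a

/-- Evaluation of a polynomial at `p`, i.e. the embedding `k[p] → W`. -/
def polyP : Polynomial k →ₐ[k] WeylA k := Polynomial.aeval (pW k)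

/-- Evaluation of a polynomial at `q`, i.e. the embedding `k[q] → W`. -/
def polyQ : Polynomial k →ₐ[k] WeylA k := Polynomial.aeval (qW k)


variable {k} in
/-- `I` is a (two-sided) ideal of the (possibly non-unital) subalgebra `S`. -/
def IsIdealOf {N : ℕ} (S : NonUnitalSubalgebra k (MW k N)) (I : Set (MW k N)) : Prop :=
  I ⊆ S ∧ (0 : MW k N) ∈ I ∧ (∀ x y, x ∈ I → y ∈ I → x + y ∈ I) ∧
    (∀ x ∈ I, -x ∈ I) ∧ ∀ x ∈ I, ∀ a ∈ S, a * x ∈ I ∧ x * a ∈ I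

variable {k} in
/-- The (possibly non-unital) algebra `S` is prime. -/
def IsPrimeAlg {N : ℕ} (S : NonUnitalSubalgebra k (MW k N)) : Prop :=
  ∀ I J : Set (MW k N), IsIdealOf S I → IsIdealOf S J →
    (∀ x ∈ I, ∀ y ∈ J, x * y = 0) → I ⊆ {0} ∨ J ⊆ {0}

variable {k} in
/-- The set of products of at most `n+1` factors from `F`. -/
def prodsUpTo {N : ℕ} (F : Set (MW k N)) : ℕ → Set (MW k N)
  | 0 => F
  | n + 1 => prodsUpTo F n ∪ {z | ∃ x ∈ prodsUpTo F n, ∃ y ∈ F, z = x * y}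

variable {k} in
/-- `S` has Gel'fand–Kirillov dimension one: the growth of any finitely
generated subalgebra is at most linear, and not every finitely generated
subalgebra is finite dimensional (by the Bergman gap theorem this
characterizes `GKdim = 1`). -/
def GKdimOne {N : ℕ} (S : NonUnitalSubalgebra k (MW k N)) : Prop :=
  (∀ F : Finset (MW k N), (F : Set (MW k N)) ⊆ S → ∃ C : ℕ, ∀ n : ℕ,
      Module.rank k (Submodule.span k (prodsUpTo (F : Set (MW k N)) n))
        ≤ ((C * (n + 1) : ℕ) : Cardinal)) ∧
  (∃ F : Finset (MW k N), (F : Set (MW k N)) ⊆ S ∧ ∀ C : ℕ, ∃ n : ℕ,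
      ¬ Module.rank k (Submodule.span k (prodsUpTo (F : Set (MW k N)) n))
        ≤ ((C : ℕ) : Cardinal))

/-!
A non-scalar central element `z` of `S` comes from the Small–Stafford–Warfield argument. In a prime
algebra `A` of linear growth some `a ≠ 0` has a corner `aAa` without zero divisors, and linear
growth and algebraic closedness provide an `s` such that right multiplication by `sa` makes `Aa` a
torsion-free `k[X]`-module of finite rank. Hence `A` embeds in a matrix ring over a field, and after
passing to an irreducible subquotient it spans that ring (Burnside). The dual basis for the trace
form, obtained inside `A` up to a common scalar from the Capelli polynomial, turns traces of
elements of `A` into central elements of `A`; were all of these scalars, `A` would be finite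
dimensional.

The derivation `[·, p]` is locally nilpotent on `M_N(W)` and preserves the centre of `S`, where its
kernel consists of scalars by the hypothesis on the centralizer. The last non-scalar iterate of `z`
under it, rescaled, is therefore a central `w` with `[w, p] = 1 = [q, p]`, and `w - q` commutes with
`p`, so its entries lie in `k[p]`.
-/

section Growth

variable {F A : Type*} [Field F] [NonUnitalRing A] [Module F A]
  [IsScalarTower F A A] [SMulCommClass F A A]

/-- A (possibly non-unital) ring is *prime* if `xAy = 0` only when `x = 0` or `y = 0`. -/
def IsPrimeRng (A : Type*) [NonUnitalRing A] : Prop :=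
  ∀ x y : A, (∀ s, x * s * y = 0) → x = 0 ∨ y = 0

theorem IsPrimeRng.finite_of_finite_range_mulLeft (hA : IsPrimeRng A) {x : A} (hx : x ≠ 0)
    [Module.Finite F (LinearMap.mulLeft F x).range] : Module.Finite F A := by
  let act : A →ₗ[F] Module.End F (LinearMap.mulLeft F x).range :=
    LinearMap.mk₂ F (fun y w ↦ ⟨w * y, by
        obtain ⟨_, v, rfl⟩ := w
        exact ⟨v * y, (mul_assoc x v y).symm⟩⟩)
      (fun _ _ _ ↦ Subtype.ext (mul_add _ _ _)) (fun _ _ _ ↦ Subtype.ext (mul_smul_comm _ _ _))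
      (fun _ _ _ ↦ Subtype.ext (add_mul _ _ _)) (fun _ _ _ ↦ Subtype.ext (smul_mul_assoc _ _ _))
  refine Module.Finite.of_injective act ((injective_iff_map_eq_zero act).2 fun y hy ↦ ?_)
  exact (hA x y fun s ↦ congrArg Subtype.val
    (LinearMap.congr_fun hy ⟨x * s, s, rfl⟩)).resolve_left hx

theorem IsPrimeRng.finite_of_finite_range_mulRight (hA : IsPrimeRng A) {x : A} (hx : x ≠ 0)
    [Module.Finite F (LinearMap.mulRight F x).range] : Module.Finite F A := by
  let act : A →ₗ[F] Module.End F (LinearMap.mulRight F x).range :=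
    LinearMap.mk₂ F (fun y w ↦ ⟨y * w, by
        obtain ⟨_, v, rfl⟩ := w
        exact ⟨y * v, mul_assoc y v x⟩⟩)
      (fun _ _ _ ↦ Subtype.ext (add_mul _ _ _)) (fun _ _ _ ↦ Subtype.ext (smul_mul_assoc _ _ _))
      (fun _ _ _ ↦ Subtype.ext (mul_add _ _ _)) (fun _ _ _ ↦ Subtype.ext (mul_smul_comm _ _ _))
  refine Module.Finite.of_injective act ((injective_iff_map_eq_zero act).2 fun y hy ↦ ?_)
  exact (hA y x fun s ↦ (mul_assoc y s x).trans (congrArg Subtype.val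
    (LinearMap.congr_fun hy ⟨s * x, s, rfl⟩))).resolve_right hx

/-- The standard filtration of an algebra by a generating subspace `V`: the `n`-th term is spanned
by the products of at most `n + 1` elements of `V`. -/
def prodFiltration (V : Submodule F A) : ℕ → Submodule F A
  | 0 => V
  | n + 1 => prodFiltration V n ⊔ Submodule.map₂ (LinearMap.mul F A) (prodFiltration V n) V

/-- `V` generates `A`, and the standard filtration of `A` by `V` grows at most linearly, with
rate `C`. -/
structure HasLinearGrowth (V : Submodule F A) (C : ℕ) : Prop where
  exists_mem : ∀ x, ∃ n, x ∈ prodFiltration V n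
  rank_le : ∀ n, Module.rank F (prodFiltration V n) ≤ (C * (n + 1) : ℕ)

variable {V : Submodule F A} {C : ℕ}

theorem prodFiltration_mono (V : Submodule F A) : Monotone (prodFiltration V) :=
  monotone_nat_of_le_succ fun _ ↦ le_sup_left

theorem prodFiltration_succ_le {n : ℕ} {P : Submodule F A} (hP : prodFiltration V n ≤ P)
    (hmul : ∀ x ∈ prodFiltration V n, ∀ v ∈ V, x * v ∈ P) : prodFiltration V (n + 1) ≤ P :=
  sup_le hP (Submodule.map₂_le.2 hmul)

theorem mul_mem_prodFiltration {m n : ℕ} {x y : A} (hx : x ∈ prodFiltration V m)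
    (hy : y ∈ prodFiltration V n) : x * y ∈ prodFiltration V (m + n + 1) := by
  suffices prodFiltration V n ≤
      (prodFiltration V (m + n + 1)).comap (LinearMap.mulLeft F x) from this hy
  clear hy
  induction n with
  | zero => exact fun v hv ↦ Submodule.mem_sup_right (Submodule.apply_mem_map₂ _ hx hv)
  | succ n ih =>
    refine prodFiltration_succ_le (fun v hv ↦ prodFiltration_mono V (Nat.le_succ _) (ih hv))
      fun y hy v hv ↦ ?_
    rw [Submodule.mem_comap, LinearMap.mulLeft_apply, ← mul_assoc]
    exact Submodule.mem_sup_right (Submodule.apply_mem_map₂ _ (ih hy) hv)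

namespace HasLinearGrowth

theorem finite (hV : HasLinearGrowth V C) (n : ℕ) : Module.Finite F (prodFiltration V n) :=
  Module.rank_lt_aleph0_iff.1 ((hV.rank_le n).trans_lt Cardinal.natCast_lt_aleph0)

theorem finrank_le (hV : HasLinearGrowth V C) (n : ℕ) :
    Module.finrank F (prodFiltration V n) ≤ C * (n + 1) :=
  Module.finrank_le_of_rank_le (hV.rank_le n)

theorem finrank_map_le (hV : HasLinearGrowth V C) (x : A) (n : ℕ) :
    Module.finrank F ((prodFiltration V n).map (LinearMap.mulLeft F x)) ≤ C * (n + 1) :=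
  have := hV.finite n
  (Submodule.finrank_map_le _ _).trans (hV.finrank_le n)

theorem exists_forall_mem (hV : HasLinearGrowth V C) {ι : Type*} [Finite ι] (x : ι → A) :
    ∃ n, ∀ i, x i ∈ prodFiltration V n := by
  cases nonempty_fintype ι
  choose n hn using fun i ↦ hV.exists_mem (x i)
  exact ⟨Finset.univ.sup n,
    fun i ↦ prodFiltration_mono V (Finset.le_sup (Finset.mem_univ i)) (hn i)⟩

theorem range_mulLeft_le (hV : HasLinearGrowth V C) {x : A} {P : Submodule F A}
    (hxV : ∀ v ∈ V, x * v ∈ P) (hPV : ∀ y ∈ P, ∀ v ∈ V, y * v ∈ P) :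
    (LinearMap.mulLeft F x).range ≤ P := by
  rintro _ ⟨y, rfl⟩
  obtain ⟨n, hy⟩ := hV.exists_mem y
  suffices prodFiltration V n ≤ P.comap (LinearMap.mulLeft F x) from this hy
  clear hy
  induction n with
  | zero => exact hxV
  | succ n ih =>
    refine prodFiltration_succ_le ih fun y hy v hv ↦ ?_
    rw [Submodule.mem_comap, LinearMap.mulLeft_apply, ← mul_assoc]
    exact hPV _ (ih hy) v hv

theorem map_mulLeft_lt_succ (hV : HasLinearGrowth V C) (hA : IsPrimeRng A)
    (hinf : ¬ Module.Finite F A) {x : A} (hx : x ≠ 0) (n : ℕ) :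
    (prodFiltration V n).map (LinearMap.mulLeft F x) <
      (prodFiltration V (n + 1)).map (LinearMap.mulLeft F x) := by
  refine lt_of_le_not_ge (Submodule.map_mono (prodFiltration_mono V n.le_succ)) fun hstable ↦
    hinf ?_
  have hrange : (LinearMap.mulLeft F x).range ≤
      (prodFiltration V n).map (LinearMap.mulLeft F x) := by
    refine hV.range_mulLeft_le
      (fun v hv ↦ ⟨v, prodFiltration_mono V n.zero_le hv, rfl⟩) ?_
    rintro _ ⟨y, hy, rfl⟩ v hv
    exact hstable ⟨y * v, Submodule.mem_sup_right (Submodule.apply_mem_map₂ _ hy hv),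
      (mul_assoc x y v).symm⟩
  have := hV.finite n
  have := Submodule.finiteDimensional_of_le hrange
  exact hA.finite_of_finite_range_mulLeft hx

theorem succ_le_finrank_map (hV : HasLinearGrowth V C) (hA : IsPrimeRng A)
    (hinf : ¬ Module.Finite F A) {x : A} (hx : x ≠ 0) (n : ℕ) :
    n + 1 ≤ Module.finrank F ((prodFiltration V n).map (LinearMap.mulLeft F x)) := by
  have := hV.finite
  induction n with
  | zero =>
    rw [zero_add, Nat.one_le_iff_ne_zero, Ne, Submodule.finrank_eq_zero]
    intro hbot
    have hxV : ∀ v ∈ V, x * v ∈ (⊥ : Submodule F A) := fun v hv ↦ hbot ▸ ⟨v, hv, rfl⟩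
    have hrange : (LinearMap.mulLeft F x).range ≤ ⊥ :=
      hV.range_mulLeft_le hxV fun y hy v _ ↦ by simp [(Submodule.mem_bot F).1 hy]
    have := Submodule.finiteDimensional_of_le hrange
    exact hinf (hA.finite_of_finite_range_mulLeft hx)
  | succ n ih =>
    exact Nat.succ_le_of_lt (ih.trans_lt
      (Submodule.finrank_lt_finrank_of_lt (hV.map_mulLeft_lt_succ hA hinf hx n)))

theorem card_le (hV : HasLinearGrowth V C) {ι : Type*} [Fintype ι] (x : ι → A)
    (U : ℕ → Submodule F A) {e c : ℕ} (hU : ∀ n, U n ≤ prodFiltration V (e * n + c))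
    (hdim : ∀ n, n ≤ Module.finrank F (U n))
    (hinj : ∀ n (v : ι → A), (∀ i, v i ∈ U n) → ∑ i, x i * v i = 0 → v = 0) :
    Fintype.card ι ≤ C * e := by
  classical
  have := hV.finite
  have (n : ℕ) : Module.Finite F (U n) := Submodule.finiteDimensional_of_le (hU n)
  obtain ⟨d, hd⟩ := hV.exists_forall_mem x
  have hcount (n : ℕ) : Fintype.card ι * n ≤ C * (d + (e * n + c) + 1 + 1) := by
    let sumMul : (ι → U n) →ₗ[F] A :=
      LinearMap.lsum F (fun _ ↦ U n) F fun i ↦ (LinearMap.mulLeft F (x i)).domRestrict (U n)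
    have sumMul_apply (v : ι → U n) : sumMul v = ∑ i, x i * v i := by
      simp [sumMul, LinearMap.lsum_apply]
    have hsumMul : Function.Injective sumMul := by
      refine (injective_iff_map_eq_zero sumMul).2 fun v hv ↦ funext fun i ↦ Subtype.ext ?_
      exact congrFun (hinj n (fun i ↦ v i) (fun i ↦ (v i).2) (sumMul_apply v ▸ hv)) i
    have hrange : sumMul.range ≤ prodFiltration V (d + (e * n + c) + 1) := by
      rintro _ ⟨v, rfl⟩
      rw [sumMul_apply]
      exact sum_mem fun i _ ↦ mul_mem_prodFiltration (hd i) (hU n (v i).2)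
    calc Fintype.card ι * n ≤ Fintype.card ι * Module.finrank F (U n) := by gcongr; exact hdim n
      _ = Module.finrank F (ι → U n) := by simp [Module.finrank_pi_fintype]
      _ = Module.finrank F sumMul.range := (LinearMap.finrank_range_of_inj hsumMul).symm
      _ ≤ _ := (Submodule.finrank_mono hrange).trans (hV.finrank_le _)
  by_contra! hlt
  nlinarith [hcount (C * (d + c + 2) + 1), Nat.mul_le_mul_right (C * (d + c + 2) + 1) hlt]

end HasLinearGrowth

end Growth

section Corner

variable {F A : Type*} [Field F] [NonUnitalRing A] [Module F A]
  [IsScalarTower F A A] [SMulCommClass F A A] {V : Submodule F A} {C : ℕ}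

/-- The corner `aAa`, under the product `(asa) ∘ (ata) = asata` coming from the homotope of `A`
at `a`, has no zero divisors. -/
def IsDomainCorner (a : A) : Prop :=
  ∀ s t, a * s * a * t * a = 0 → a * s * a = 0 ∨ a * t * a = 0

theorem HasLinearGrowth.exists_finrank_map_add_le (hV : HasLinearGrowth V C) {a s t : A}
    (h : a * s * a * t * a = 0) : ∃ d, ∀ n,
      Module.finrank F ((prodFiltration V (n + d)).map (LinearMap.mulLeft F (a * s * a))) +
        Module.finrank F ((prodFiltration V n).map (LinearMap.mulLeft F (a * t * a))) ≤
      Module.finrank F ((prodFiltration V (n + d)).map (LinearMap.mulLeft F a)) := by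
  have := hV.finite
  obtain ⟨d, hd⟩ := hV.exists_mem (t * a)
  refine ⟨d + 1, fun n ↦ ?_⟩
  set U := (prodFiltration V (n + (d + 1))).map (LinearMap.mulLeft F a) with hU
  let f : U →ₗ[F] A := (LinearMap.mulLeft F (a * s)).domRestrict U
  have hrange :
      f.range = (prodFiltration V (n + (d + 1))).map (LinearMap.mulLeft F (a * s * a)) := by
    rw [LinearMap.range_domRestrict, hU, ← Submodule.map_comp, LinearMap.mulLeft_mul F A (a * s)]
  have hker : (prodFiltration V n).map (LinearMap.mulLeft F (a * t * a)) ≤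
      f.ker.map U.subtype := by
    rintro _ ⟨v, hv, rfl⟩
    refine ⟨⟨a * (t * a * v), t * a * v, ?_, rfl⟩, ?_, by simp [mul_assoc]⟩
    · rw [add_comm, add_right_comm]
      exact mul_mem_prodFiltration hd hv
    · change a * s * (a * (t * a * v)) = 0
      rw [← zero_mul v, ← h]
      simp only [mul_assoc]
  rw [← hrange, ← f.finrank_range_add_finrank_ker, ← Submodule.finrank_map_subtype_eq U f.ker]
  exact Nat.add_le_add_left (Submodule.finrank_mono hker) _

-- Take `a ≠ 0` for which `aA` grows with the least slope: zero divisors in `aAa` would make some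
-- `(asa)A` grow with a smaller slope.
theorem HasLinearGrowth.exists_isDomainCorner (hV : HasLinearGrowth V C) (hA : IsPrimeRng A)
    (hinf : ¬ Module.Finite F A) : ∃ a : A, a ≠ 0 ∧ IsDomainCorner a := by
  classical
  have := hV.finite
  have hslope : ∃ j, ∃ a : A, a ≠ 0 ∧ ∃ e, ∀ n,
      Module.finrank F ((prodFiltration V n).map (LinearMap.mulLeft F a)) ≤ j * n + e := by
    have : Nontrivial A := not_subsingleton_iff_nontrivial.1 fun _ ↦ hinf inferInstance
    obtain ⟨a, ha⟩ := exists_ne (0 : A)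
    exact ⟨C, a, ha, C, fun n ↦ hV.finrank_map_le a n⟩
  obtain ⟨a, ha, e, he⟩ := Nat.find_spec hslope
  refine ⟨a, ha, fun s t hst ↦ ?_⟩
  by_contra! ⟨has, hat⟩
  obtain ⟨d, hd⟩ := hV.exists_finrank_map_add_le hst
  have hdrop (n : ℕ) :
      Module.finrank F ((prodFiltration V n).map (LinearMap.mulLeft F (a * s * a))) + (n + 1) ≤
        Nat.find hslope * n + (Nat.find hslope * d + e) :=
    have hle := prodFiltration_mono V (Nat.le_add_right n d)
    calc _ ≤ _ := Nat.add_le_add (Submodule.finrank_mono (Submodule.map_mono hle))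
            (hV.succ_le_finrank_map hA hinf hat n)
      _ ≤ _ := (hd n).trans (he (n + d))
      _ = _ := by ring
  obtain ⟨j, hj⟩ : ∃ j, Nat.find hslope = j + 1 := by
    refine Nat.exists_eq_succ_of_ne_zero fun hzero ↦ ?_
    have := hdrop (Nat.find hslope * d + e)
    rw [hzero] at this
    omega
  refine Nat.find_min hslope (m := j) (by omega)
    ⟨a * s * a, has, Nat.find hslope * d + e, fun n ↦ ?_⟩
  have := hdrop n
  rw [hj] at this ⊢
  linarith [add_mul j 1 n]

end Corner

section PolynomialAction

variable {F A : Type*} [Field F] [NonUnitalRing A] [Module F A]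
  [IsScalarTower F A A] [SMulCommClass F A A]

theorem aeval_mulRight_mul (c x y : A) (f : F[X]) :
    aeval (LinearMap.mulRight F c) f (x * y) = x * aeval (LinearMap.mulRight F c) f y := by
  have h : Commute (LinearMap.mulLeft F x) (aeval (LinearMap.mulRight F c) f) :=
    Polynomial.induction_on f (fun r ↦ by simpa using Algebra.commute_algebraMap_right r _)
      (fun f g hf hg ↦ by simpa using hf.add_right hg) (fun n r _ ↦ by
        simpa using (Algebra.commute_algebraMap_right r _).mul_right
          ((LinearMap.commute_mulLeft_right x c).pow_right _))
  exact (LinearMap.congr_fun h y).symm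

theorem aeval_mulRight_apply_mul (a s z : A) (f : F[X]) :
    aeval (LinearMap.mulRight F (s * a)) f a * z = a * aeval (LinearMap.mulLeft F (s * a)) f z := by
  have hpow (n : ℕ) : ((LinearMap.mulRight F (s * a)) ^ n) a * z =
      a * ((LinearMap.mulLeft F (s * a)) ^ n) z := by
    induction n generalizing z with
    | zero => rfl
    | succ n ih =>
      rw [pow_succ', Module.End.mul_apply, LinearMap.mulRight_apply, mul_assoc, ih, pow_succ]
      rfl
  induction f using Polynomial.induction_on' with
  | add f g hf hg => simp only [map_add, LinearMap.add_apply, add_mul, mul_add, hf, hg]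
  | monomial n r =>
    simp only [aeval_monomial, Module.algebraMap_end_eq_smul_id, smul_mul_assoc, one_mul,
      LinearMap.smul_apply, mul_smul_comm, hpow, ← Module.End.one_eq_id]

theorem IsPrimeRng.exists_mul_mul_ne_zero (hA : IsPrimeRng A) {x y : A} (hx : x ≠ 0)
    (hy : y ≠ 0) : ∃ s, x * s * y ≠ 0 := by
  by_contra! h
  exact (hA x y h).elim hx hy

variable {a : A}

theorem IsDomainCorner.eq_zero_or_aeval_eq_zero (ha : IsDomainCorner a) (hA : IsPrimeRng A)
    (ha0 : a ≠ 0) {s x : A} {f : F[X]}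
    (h : aeval (LinearMap.mulRight F (s * a)) f (x * a) = 0) :
    x * a = 0 ∨ aeval (LinearMap.mulRight F (s * a)) f a = 0 := by
  by_contra! ⟨hx, hf⟩
  rw [aeval_mulRight_mul] at h
  set b := aeval (LinearMap.mulRight F (s * a)) f a
  obtain ⟨y, hy⟩ := hA.exists_mul_mul_ne_zero ha0 hx
  obtain ⟨z, hz⟩ := hA.exists_mul_mul_ne_zero hf ha0
  have hbz : b * z = a * aeval (LinearMap.mulLeft F (s * a)) f z := aeval_mulRight_apply_mul a s z f
  refine (ha (y * x) (aeval (LinearMap.mulLeft F (s * a)) f z) ?_).elim (fun h' ↦ hy ?_)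
    fun h' ↦ hz ?_
  · calc _ = a * y * x * (b * z) * a := by rw [hbz]; simp only [mul_assoc]
      _ = a * y * (x * b) * z * a := by simp only [mul_assoc]
      _ = 0 := by simp only [h, mul_zero, zero_mul]
  · simpa only [mul_assoc] using h'
  · rwa [hbz]

theorem IsDomainCorner.exists_eq_smul [IsAlgClosed F] (ha : IsDomainCorner a) (hA : IsPrimeRng A)
    (ha0 : a ≠ 0) {s : A} {f : F[X]} (hf0 : f ≠ 0)
    (hf : aeval (LinearMap.mulRight F (s * a)) f a = 0) : ∃ γ : F, a * s * a = γ • a := by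
  induction hn : f.natDegree using Nat.strong_induction_on generalizing f with
  | _ n ih =>
    have hdeg : f.degree ≠ 0 := by
      intro h0
      rw [eq_C_of_degree_eq_zero h0] at hf hf0
      simp only [aeval_C, Module.algebraMap_end_apply, smul_eq_zero, ha0, or_false] at hf
      simp [hf] at hf0
    obtain ⟨γ, hγ⟩ := IsAlgClosed.exists_root f hdeg
    obtain ⟨g, rfl⟩ := dvd_iff_isRoot.2 hγ
    have hg0 := right_ne_zero_of_mul hf0
    rw [mul_comm, map_mul, Module.End.mul_apply] at hf
    have hw : aeval (LinearMap.mulRight F (s * a)) (X - C γ) a = a * s * a - γ • a := by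
      simp [mul_assoc]
    rw [hw] at hf
    by_cases hw0 : a * s * a - γ • a = 0
    · exact ⟨γ, sub_eq_zero.1 hw0⟩
    obtain ⟨y, hy⟩ := hA.exists_mul_mul_ne_zero ha0 hw0
    have hyw : (y * a * s - γ • y) * a = y * (a * s * a - γ • a) := by
      simp only [sub_mul, mul_sub, mul_assoc, smul_mul_assoc, mul_smul_comm]
    have hg : aeval (LinearMap.mulRight F (s * a)) g ((y * a * s - γ • y) * a) = 0 := by
      rw [hyw, aeval_mulRight_mul, hf, mul_zero]
    refine (ha.eq_zero_or_aeval_eq_zero hA ha0 hg).elim (fun h ↦ absurd ?_ hy) fun h ↦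
      ih _ ?_ hg0 h rfl
    · rw [mul_assoc, ← hyw, h, mul_zero]
    · rw [← hn, natDegree_mul (X_sub_C_ne_zero γ) hg0, natDegree_X_sub_C]
      omega

variable {V : Submodule F A} {C : ℕ}

-- If `aAa = F a`, then linearly independent elements `xᵢ a` make the sum of the `xᵢ aA` direct,
-- while linear growth bounds the number of independent copies of `aA`.
theorem HasLinearGrowth.exists_mul_mul_ne_smul (hV : HasLinearGrowth V C) (hA : IsPrimeRng A)
    (hinf : ¬ Module.Finite F A) (ha0 : a ≠ 0) : ∃ s, ∀ γ : F, a * s * a ≠ γ • a := by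
  by_contra! h
  choose γ hγ using h
  have hcard : ((C + 1 : ℕ) : Cardinal) ≤ Module.rank F (LinearMap.mulRight F a).range := by
    by_contra! hlt
    have := Module.rank_lt_aleph0_iff.1 (hlt.trans Cardinal.natCast_lt_aleph0)
    exact hinf (hA.finite_of_finite_range_mulRight ha0)
  obtain ⟨w, hw⟩ := exists_linearIndependent_of_le_rank hcard
  choose x hx using fun i ↦ (w i).2
  have hxa : LinearIndependent F fun i ↦ x i * a := by
    simp only [LinearMap.mulRight_apply] at hx
    simp only [hx]
    exact hw.map' _ (Submodule.ker_subtype _)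
  obtain ⟨d, hd⟩ := hV.exists_mem a
  have hle := hV.card_le (e := 1) (c := d + 1) x
    (fun n ↦ (prodFiltration V n).map (LinearMap.mulLeft F a)) ?_
    (fun n ↦ (Nat.le_succ n).trans (hV.succ_le_finrank_map hA hinf ha0 n)) ?_
  · simp at hle
  · rintro n _ ⟨v, hv, rfl⟩
    rw [one_mul, ← add_assoc, add_comm n d]
    exact mul_mem_prodFiltration hd hv
  · intro n v hv hsum
    choose u _ hu using hv
    have hγ0 (z : A) : ∀ i, γ (u i * z) = 0 := by
      refine Fintype.linearIndependent_iff.1 hxa _ ?_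
      calc ∑ i, γ (u i * z) • (x i * a) = (∑ i, x i * v i) * (z * a) := by
            rw [Finset.sum_mul]
            refine Finset.sum_congr rfl fun i _ ↦ ?_
            rw [← mul_smul_comm, ← hγ, ← hu, LinearMap.mulLeft_apply]
            simp only [mul_assoc]
        _ = 0 := by rw [hsum, zero_mul]
    refine funext fun i ↦ (hA (v i) a fun z ↦ ?_).resolve_right ha0
    rw [← hu, LinearMap.mulLeft_apply, mul_assoc a, hγ, hγ0, zero_smul]

theorem HasLinearGrowth.exists_transcendental_corner [IsAlgClosed F] (hV : HasLinearGrowth V C)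
    (hA : IsPrimeRng A) (hinf : ¬ Module.Finite F A) :
    ∃ a s : A, IsDomainCorner a ∧ a ≠ 0 ∧
      ∀ f : F[X], aeval (LinearMap.mulRight F (s * a)) f a = 0 → f = 0 := by
  obtain ⟨a, ha0, ha⟩ := hV.exists_isDomainCorner hA hinf
  obtain ⟨s, hs⟩ := hV.exists_mul_mul_ne_smul hA hinf ha0
  refine ⟨a, s, ha, ha0, fun f hf ↦ ?_⟩
  by_contra hf0
  obtain ⟨γ, hγ⟩ := ha.exists_eq_smul hA ha0 hf0 hf
  exact hs γ hγ

end PolynomialAction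

section MatrixEmbedding

open TensorProduct

variable {F A : Type*} [Field F] [NonUnitalRing A] [Module F A]

theorem exists_matrix_embedding_of_flat {R M : Type*} [CommRing R] [Algebra F R]
    [AddCommGroup M] [Module R M] [Module F M] [IsScalarTower F R M] [Module.Flat R M]
    (hM : Module.rank R M < Cardinal.aleph0) {φ : A →ₙₐ[F] Module.End R M}
    (hφ : Function.Injective φ) (K : Type*) [Field K] [Algebra R K] [Algebra F K]
    [IsScalarTower F R K] [FaithfulSMul R K] :
    ∃ n, ∃ ψ : A →ₙₐ[F] Matrix (Fin n) (Fin n) K, Function.Injective ψ := by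
  have : Module.Finite K (K ⊗[R] M) := by
    rw [← Module.rank_lt_aleph0_iff, ← Cardinal.lift_lt_aleph0,
      (TensorProduct.isBaseChange R M K).lift_rank_eq]
    exact Cardinal.lift_lt_aleph0.2 hM
  let toMatrix := algEquivMatrix (Module.finBasis K (K ⊗[R] M))
  let ψ : Module.End R M →ₙₐ[F] Matrix (Fin _) (Fin _) K := AlgHom.toNonUnitalAlgHom
    ((toMatrix.toAlgHom.restrictScalars F).comp
      ((Module.End.baseChangeHom R K M).restrictScalars F))
  have hψ : Function.Injective ψ :=
    toMatrix.injective.comp (LinearMap.baseChangeHom_injective R M K)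
  exact ⟨Module.finrank K (K ⊗[R] M), ψ.comp φ, hψ.comp hφ⟩

variable {U : Type*} [AddCommGroup U] [Module F U]

/-- An action of `A` on `U` that commutes with the endomorphism `ρ`, as an action by
`F[X]`-linear maps, where `X` acts on `U` as `ρ`. -/
def toEndAEval (ρ : Module.End F U) (φ : A →ₙₐ[F] Module.End F U) (hφ : ∀ y, Commute (φ y) ρ) :
    A →ₙₐ[F] Module.End F[X] (Module.AEval' ρ) where
  toFun y := LinearMap.ofAEval ρ ((Module.AEval'.of ρ).toLinearMap ∘ₗ φ y) fun u ↦
    (congrArg (Module.AEval'.of ρ) (LinearMap.congr_fun (hφ y) u)).trans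
      (Module.AEval'.X_smul_of ρ (φ y u)).symm
  map_smul' r y := LinearMap.ext fun u ↦ congrArg (Module.AEval'.of ρ)
    (LinearMap.congr_fun (map_smul φ r y) u)
  map_zero' := LinearMap.ext fun u ↦ congrArg (Module.AEval'.of ρ)
    (LinearMap.congr_fun (map_zero φ) u)
  map_add' y z := LinearMap.ext fun u ↦ congrArg (Module.AEval'.of ρ)
    (LinearMap.congr_fun (map_add φ y z) u)
  map_mul' y z := LinearMap.ext fun u ↦ congrArg (Module.AEval'.of ρ)
    (LinearMap.congr_fun (map_mul φ y z) u)

theorem toEndAEval_injective {ρ : Module.End F U} {φ : A →ₙₐ[F] Module.End F U}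
    (hφ : ∀ y, Commute (φ y) ρ) (hinj : Function.Injective φ) :
    Function.Injective (toEndAEval ρ φ hφ) :=
  fun _ _ h ↦ hinj (LinearMap.ext fun u ↦ LinearMap.congr_fun h (Module.AEval'.of ρ u))

theorem exists_matrix_embedding_of_commute {ρ : Module.End F U} {φ : A →ₙₐ[F] Module.End F U}
    (hφ : ∀ y, Commute (φ y) ρ) (hinj : Function.Injective φ)
    (htf : ∀ (f : F[X]) u, aeval ρ f u = 0 → f = 0 ∨ u = 0) {r : ℕ}
    (hr : ∀ t : Finset U, (∀ f : t → F[X], ∑ u, aeval ρ (f u) u = 0 → f = 0) → t.card ≤ r) :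
    ∃ n, ∃ ψ : A →ₙₐ[F] Matrix (Fin n) (Fin n) (AlgebraicClosure (RatFunc F)),
      Function.Injective ψ := by
  have : Module.IsTorsionFree F[X] (Module.AEval' ρ) :=
    .of_smul_eq_zero htf
  have hrank : Module.rank F[X] (Module.AEval' ρ) ≤ r :=
    rank_le fun t ht ↦ hr t fun f hf ↦ funext (Fintype.linearIndependent_iff.1 ht f hf)
  have : FaithfulSMul F[X] (AlgebraicClosure (RatFunc F)) :=
    .trans F[X] (RatFunc F) (AlgebraicClosure (RatFunc F))
  exact exists_matrix_embedding_of_flat (hrank.trans_lt Cardinal.natCast_lt_aleph0)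
    (toEndAEval_injective hφ hinj) _

end MatrixEmbedding

section LinearGrowthEmbedding

variable {F A : Type*} [Field F] [NonUnitalRing A] [Module F A]
  [IsScalarTower F A A] [SMulCommClass F A A] {V : Submodule F A} {C : ℕ}

theorem aeval_mulRight_mem_prodFiltration {a c : A} {d e : ℕ} (ha : a ∈ prodFiltration V d)
    (hc : c ∈ prodFiltration V e) {f : F[X]} {n : ℕ} (hf : f ∈ degreeLT F n) :
    aeval (LinearMap.mulRight F c) f a ∈ prodFiltration V ((e + 1) * n + d) := by
  have hpow (i : ℕ) : ((LinearMap.mulRight F c) ^ i) a ∈ prodFiltration V ((e + 1) * i + d) := by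
    induction i with
    | zero => simpa using ha
    | succ i ih =>
      rw [pow_succ', Module.End.mul_apply, LinearMap.mulRight_apply]
      convert mul_mem_prodFiltration ih hc using 2
      ring
  rw [aeval_eq_sum_range, LinearMap.sum_apply]
  refine Submodule.sum_mem _ fun i _ ↦ ?_
  rw [LinearMap.smul_apply]
  by_cases hi : i < n
  · refine Submodule.smul_mem _ _ (prodFiltration_mono V ?_ (hpow i))
    gcongr
  · rw [coeff_eq_zero_of_degree_lt ((mem_degreeLT.1 hf).trans_le (by simpa using hi)), zero_smul]
    exact zero_mem _

theorem aeval_apply_of_comp_eq {M M' : Type*} [AddCommGroup M] [Module F M] [AddCommGroup M']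
    [Module F M'] {g : M →ₗ[F] M'} {ρ : Module.End F M} {ρ' : Module.End F M'}
    (h : ρ' ∘ₗ g = g ∘ₗ ρ) (f : F[X]) (u : M) : aeval ρ' f (g u) = g (aeval ρ f u) := by
  simp only [aeval_eq_sum_range, LinearMap.sum_apply, LinearMap.smul_apply, map_sum, map_smul]
  refine Finset.sum_congr rfl fun n _ ↦ ?_
  exact congrArg _ (LinearMap.congr_fun (Module.End.commute_pow_left_of_commute h n) u)

theorem HasLinearGrowth.card_le_of_transcendental (hV : HasLinearGrowth V C) {a c : A} {d e : ℕ}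
    (ha : a ∈ prodFiltration V d) (hc : c ∈ prodFiltration V e)
    (htr : ∀ f : F[X], aeval (LinearMap.mulRight F c) f a = 0 → f = 0) {ι : Type*} [Fintype ι]
    (x : ι → A)
    (hx : ∀ f : ι → F[X], ∑ i, x i * aeval (LinearMap.mulRight F c) (f i) a = 0 → f = 0) :
    Fintype.card ι ≤ C * (e + 1) := by
  let evalAt : F[X] →ₗ[F] A := LinearMap.applyₗ a ∘ₗ (aeval (LinearMap.mulRight F c)).toLinearMap
  have hinj : Function.Injective evalAt := (injective_iff_map_eq_zero evalAt).2 htr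
  refine hV.card_le x (fun n ↦ (degreeLT F n).map evalAt) (c := d) ?_ (fun n ↦ ?_)
    fun n v hv hsum ↦ ?_
  · rintro n _ ⟨f, hf, rfl⟩
    exact aeval_mulRight_mem_prodFiltration ha hc hf
  · rw [← ((degreeLT F n).equivMapOfInjective evalAt hinj).finrank_eq,
      (degreeLTEquiv F n).finrank_eq, Module.finrank_fin_fun]
  · choose f _ hf using hv
    obtain rfl : v = fun i ↦ evalAt (f i) := funext fun i ↦ (hf i).symm
    rw [hx f hsum]
    exact funext fun _ ↦ map_zero evalAt

/-- The action of `A` on its left ideal `A * a` by left multiplication. -/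
def mulLeftRange (F : Type*) {A : Type*} [Field F] [NonUnitalRing A] [Module F A]
    [IsScalarTower F A A] [SMulCommClass F A A] (a : A) :
    A →ₙₐ[F] Module.End F (LinearMap.mulRight F a).range where
  toFun y := (LinearMap.mulLeft F y).restrict fun _ ⟨x, hx⟩ ↦ ⟨y * x, by
    rw [← hx]; exact mul_assoc y x a⟩
  map_smul' r y := LinearMap.ext fun u ↦ Subtype.ext (smul_mul_assoc r y u)
  map_zero' := LinearMap.ext fun u ↦ Subtype.ext (zero_mul (u : A))
  map_add' y z := LinearMap.ext fun u ↦ Subtype.ext (add_mul y z u)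
  map_mul' y z := LinearMap.ext fun u ↦ Subtype.ext (mul_assoc y z u)

theorem IsPrimeRng.mulLeftRange_injective (hA : IsPrimeRng A) {a : A} (ha0 : a ≠ 0) :
    Function.Injective (mulLeftRange F a) :=
  (injective_iff_map_eq_zero _).2 fun y hy ↦ (hA y a fun x ↦ (mul_assoc y x a).trans
    (congrArg Subtype.val (LinearMap.congr_fun hy ⟨x * a, x, rfl⟩))).resolve_right ha0

theorem HasLinearGrowth.exists_matrix_embedding [IsAlgClosed F] (hV : HasLinearGrowth V C)
    (hA : IsPrimeRng A) (hinf : ¬ Module.Finite F A) :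
    ∃ n, ∃ ψ : A →ₙₐ[F] Matrix (Fin n) (Fin n) (AlgebraicClosure (RatFunc F)),
      Function.Injective ψ := by
  obtain ⟨a, s, ha, ha0, htr⟩ := hV.exists_transcendental_corner hA hinf
  obtain ⟨d, hd⟩ := hV.exists_mem a
  obtain ⟨e, he⟩ := hV.exists_mem (s * a)
  let ρ : Module.End F (LinearMap.mulRight F a).range :=
    (LinearMap.mulRight F (s * a)).restrict fun _ ⟨x, hx⟩ ↦ ⟨x * a * s, by
      rw [← hx]; simp only [LinearMap.mulRight_apply, mul_assoc]⟩
  have coe_aeval (f : F[X]) (u : (LinearMap.mulRight F a).range) :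
      aeval (LinearMap.mulRight F (s * a)) f u = (aeval ρ f u : A) :=
    aeval_apply_of_comp_eq (g := (LinearMap.mulRight F a).range.subtype) rfl f u
  refine exists_matrix_embedding_of_commute (ρ := ρ)
    (fun y ↦ LinearMap.ext fun u ↦ Subtype.ext (mul_assoc y (u : A) (s * a)).symm)
    (hA.mulLeftRange_injective ha0) (fun f u hfu ↦ ?_) (r := C * (e + 1)) fun t ht ↦ ?_
  · obtain ⟨_, x, rfl⟩ := u
    have := congrArg Subtype.val hfu
    rw [← coe_aeval] at this
    exact (ha.eq_zero_or_aeval_eq_zero hA ha0 this).symm.imp (htr f) Subtype.ext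
  · choose x hx using fun u : t ↦ u.1.2
    rw [← Fintype.card_coe]
    refine hV.card_le_of_transcendental hd he htr x fun f hf ↦ ht f (Subtype.ext ?_)
    rw [AddSubmonoidClass.coe_finsetSum]
    refine (Finset.sum_congr rfl fun u _ ↦ ?_).trans hf
    rw [← coe_aeval, ← hx, LinearMap.mulRight_apply, aeval_mulRight_mul]

end LinearGrowthEmbedding

section Burnside

theorem subalgebra_eq_top_of_irreducible {K V : Type*} [Field K] [IsAlgClosed K] [AddCommGroup V]
    [Module K V] [Module.Finite K V] [Nontrivial V] (B : Subalgebra K (Module.End K V))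
    (hB : ∀ U : Submodule K V, (∀ f ∈ B, U ∈ f.invtSubmodule) → U = ⊥ ∨ U = ⊤) : B = ⊤ := by
  classical
  have : IsSimpleModule B V := by
    refine isSimpleModule_iff B V |>.2 { eq_bot_or_eq_top := fun U ↦ ?_ }
    simpa using hB (U.restrictScalars K) fun f hf v hv ↦ U.smul_mem (⟨f, hf⟩ : B) hv
  have hschur := IsSimpleModule.algebraMap_end_bijective_of_isAlgClosed (A := B) (V := V) K
  refine eq_top_iff.2 fun f _ ↦ ?_
  let f' : Module.End (Module.End B V) V :=
    { f with
      map_smul' := fun g v ↦ by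
        obtain ⟨c, rfl⟩ := hschur.2 g
        simp }
  let b := Module.finBasis K V
  obtain ⟨r, hr⟩ := jacobson_density f' (Finset.univ.image b)
  obtain rfl : f = r := b.ext fun i ↦ hr (b i) (Finset.mem_image_of_mem b (Finset.mem_univ i))
  exact r.2

theorem nonUnitalSubalgebra_eq_top_of_irreducible {K V : Type*} [Field K] [IsAlgClosed K]
    [AddCommGroup V] [Module K V] [Module.Finite K V] {T : NonUnitalSubalgebra K (Module.End K V)}
    (hT : T ≠ ⊥)
    (hirr : ∀ U : Submodule K V, (∀ f ∈ T, U ∈ f.invtSubmodule) → U = ⊥ ∨ U = ⊤) : T = ⊤ := by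
  have : Nontrivial (Module.End K V) := by
    by_contra! _
    exact hT (Subsingleton.elim _ _)
  have : Nontrivial V := by
    by_contra! _
    exact not_nontrivial (Module.End K V) this
  -- `T` need not be unital, so Burnside's theorem is applied to its idealizer, which shows that `T`
  -- is a two-sided ideal of the simple ring `End V`.
  let idealizer : Subalgebra K (Module.End K V) :=
    { carrier := {a | ∀ f ∈ T, f * a ∈ T ∧ a * f ∈ T}
      mul_mem' := fun {a b} ha hb f hf ↦
        ⟨mul_assoc f a b ▸ (hb _ (ha f hf).1).1, mul_assoc a b f ▸ (ha _ (hb f hf).2).2⟩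
      add_mem' := fun {a b} ha hb f hf ↦
        ⟨mul_add f a b ▸ add_mem (ha f hf).1 (hb f hf).1,
          add_mul a b f ▸ add_mem (ha f hf).2 (hb f hf).2⟩
      algebraMap_mem' := fun c f hf ↦ by
        rw [← Algebra.commutes, ← Algebra.smul_def]
        exact ⟨T.smul_mem c hf, T.smul_mem c hf⟩ }
  have hidealizer : idealizer = ⊤ := subalgebra_eq_top_of_irreducible idealizer fun U hU ↦
    hirr U fun f hf ↦ hU f fun g hg ↦ ⟨mul_mem hg hf, mul_mem hf hg⟩
  have hideal (a : Module.End K V) {f : Module.End K V} (hf : f ∈ T) : f * a ∈ T ∧ a * f ∈ T :=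
    (hidealizer ▸ Algebra.mem_top : a ∈ idealizer) f hf
  have : IsSimpleRing (Module.End K V) :=
    have := Module.finrank_pos (R := K) (M := V)
    have : NeZero (Module.finrank K V) := ⟨this.ne'⟩
    .of_ringEquiv (algEquivMatrix (Module.finBasis K V)).symm.toRingEquiv inferInstance
  let I : TwoSidedIdeal (Module.End K V) := .mk' T (zero_mem T) add_mem neg_mem
    (fun hf ↦ (hideal _ hf).2) fun hf ↦ (hideal _ hf).1
  have hI (f : Module.End K V) : f ∈ I ↔ f ∈ T := TwoSidedIdeal.mem_mk' ..
  refine (eq_bot_or_eq_top I).elim (fun h ↦ absurd ?_ hT) fun h ↦ ?_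
  · refine eq_bot_iff.2 fun f hf ↦ NonUnitalAlgebra.mem_bot.2 ?_
    rwa [← hI, h, TwoSidedIdeal.mem_bot] at hf
  · refine eq_top_iff.2 fun f _ ↦ ?_
    rw [← hI, h]
    trivial

end Burnside

section IrreducibleEmbedding

variable {F K A V : Type*} [Field F] [Field K] [Algebra F K] [NonUnitalRing A] [Module F A]
  [AddCommGroup V] [Module F V] [Module K V] [IsScalarTower F K V]

/-- The action of `A` on an invariant subspace. -/
def restrictAction (φ : A →ₙₐ[F] Module.End K V) (U : Submodule K V)
    (hU : ∀ x, U ∈ (φ x).invtSubmodule) : A →ₙₐ[F] Module.End K U where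
  toFun x := (φ x).restrict (hU x)
  map_smul' r x := LinearMap.ext fun u ↦ Subtype.ext (LinearMap.congr_fun (map_smul φ r x) u)
  map_zero' := LinearMap.ext fun u ↦ Subtype.ext (LinearMap.congr_fun (map_zero φ) u)
  map_add' x y := LinearMap.ext fun u ↦ Subtype.ext (LinearMap.congr_fun (map_add φ x y) u)
  map_mul' x y := LinearMap.ext fun u ↦ Subtype.ext (LinearMap.congr_fun (map_mul φ x y) u)

/-- The action of `A` on the quotient by an invariant subspace. -/
def quotientAction (φ : A →ₙₐ[F] Module.End K V) (U : Submodule K V)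
    (hU : ∀ x, U ∈ (φ x).invtSubmodule) : A →ₙₐ[F] Module.End K (V ⧸ U) where
  toFun x := U.mapQ U (φ x) (hU x)
  map_smul' r x := Submodule.linearMap_qext U <| LinearMap.ext fun v ↦
    congrArg U.mkQ (LinearMap.congr_fun (map_smul φ r x) v)
  map_zero' := Submodule.linearMap_qext U <| LinearMap.ext fun v ↦
    congrArg U.mkQ (LinearMap.congr_fun (map_zero φ) v)
  map_add' x y := Submodule.linearMap_qext U <| LinearMap.ext fun v ↦
    congrArg U.mkQ (LinearMap.congr_fun (map_add φ x y) v)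
  map_mul' x y := Submodule.linearMap_qext U <| LinearMap.ext fun v ↦
    congrArg U.mkQ (LinearMap.congr_fun (map_mul φ x y) v)

variable {φ : A →ₙₐ[F] Module.End K V}

theorem IsPrimeRng.injective_restrictAction_or_quotientAction (hA : IsPrimeRng A)
    (hφ : Function.Injective φ) {U : Submodule K V} (hU : ∀ x, U ∈ (φ x).invtSubmodule) :
    Function.Injective (restrictAction φ U hU) ∨ Function.Injective (quotientAction φ U hU) := by
  by_contra! ⟨hsub, hquot⟩
  simp only [injective_iff_map_eq_zero, not_forall] at hsub hquot
  obtain ⟨x, hx, hx0⟩ := hsub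
  obtain ⟨y, hy, hy0⟩ := hquot
  have hxU {v : V} (hv : v ∈ U) : φ x v = 0 := congrArg Subtype.val (LinearMap.congr_fun hx ⟨v, hv⟩)
  have hyU (v : V) : φ y v ∈ U :=
    (Submodule.Quotient.mk_eq_zero U).1 (LinearMap.congr_fun hy (U.mkQ v))
  refine (hA x y fun s ↦ hφ (LinearMap.ext fun v ↦ ?_)).elim hx0 hy0
  rw [map_mul, map_mul, map_zero]
  exact hxU (hU s (hyU v))

theorem span_range_eq_top_of_irreducible [IsAlgClosed K] [Nontrivial A] [Module.Finite K V]
    (hφ : Function.Injective φ)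
    (hirr : ∀ U : Submodule K V, (∀ x, U ∈ (φ x).invtSubmodule) → U = ⊥ ∨ U = ⊤) :
    Submodule.span K (Set.range φ) = ⊤ := by
  have hclosure : (Subsemigroup.closure (Set.range φ) : Set (Module.End K V)) = Set.range φ :=
    congrArg _ (MulHom.srange (φ : A →ₙ* Module.End K V)).closure_eq
  have hmem (x : A) : φ x ∈ NonUnitalAlgebra.adjoin K (Set.range φ) :=
    NonUnitalAlgebra.subset_adjoin K ⟨x, rfl⟩
  rw [← hclosure, ← NonUnitalAlgebra.adjoin_eq_span, nonUnitalSubalgebra_eq_top_of_irreducible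
    (fun h ↦ ?_) fun U hU ↦ hirr U fun x ↦ hU _ (hmem x)]
  · rfl
  · obtain ⟨x, hx⟩ := exists_ne (0 : A)
    exact hx (hφ (by simpa [h, NonUnitalAlgebra.mem_bot] using hmem x))

theorem IsPrimeRng.exists_span_range_eq_top [IsAlgClosed K] (hA : IsPrimeRng A) [Nontrivial A]
    [Module.Finite K V] (hφ : Function.Injective φ) :
    ∃ n, ∃ ψ : A →ₙₐ[F] Matrix (Fin n) (Fin n) K,
      Function.Injective ψ ∧ Submodule.span K (Set.range ψ) = ⊤ := by
  induction hd : Module.finrank K V using Nat.strong_induction_on generalizing V with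
  | _ d ih =>
    by_cases hirr : ∀ U : Submodule K V, (∀ x, U ∈ (φ x).invtSubmodule) → U = ⊥ ∨ U = ⊤
    · let e := algEquivMatrix (Module.finBasis K V)
      refine ⟨Module.finrank K V, (e.toAlgHom.restrictScalars F).toNonUnitalAlgHom.comp φ,
        e.injective.comp hφ, ?_⟩
      calc _ = Submodule.span K (e.toLinearMap '' Set.range φ) :=
            congrArg _ (Set.range_comp e φ)
        _ = ⊤ := ?_
      rw [← Submodule.map_span, span_range_eq_top_of_irreducible hφ hirr, Submodule.map_top]
      exact LinearMap.range_eq_top.2 e.surjective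
    · push Not at hirr
      obtain ⟨U, hU, hbot, htop⟩ := hirr
      obtain h | h := hA.injective_restrictAction_or_quotientAction hφ hU
      · exact ih _ (hd ▸ Submodule.finrank_lt htop) h rfl
      · have := U.finrank_quotient_add_finrank
        have := mt Submodule.finrank_eq_zero.1 hbot
        exact ih _ (by omega) h rfl

end IrreducibleEmbedding

section Capelli

variable {K m : Type*} [Field K] [Fintype m] [DecidableEq m] {n : ℕ}

/-- The trace `∑ σ, sign σ • tr (a₀ x_{σ 0} a₁ x_{σ 1} ⋯)` of the Capelli polynomial, as an
alternating function of `x`. Freeing one entry `xᵢ` at a time produces trace-dual bases. -/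
def capelliTrace (a : Fin n → Matrix m m K) : Matrix m m K [⋀^Fin n]→ₗ[K] K :=
  MultilinearMap.alternatization ((Matrix.traceLinearMap m K K).compMultilinearMap
    ((MultilinearMap.mkPiAlgebraFin K n (Matrix m m K)).compLinearMap
      fun t ↦ LinearMap.mulLeft K (a t)))

theorem capelliTrace_apply (a x : Fin n → Matrix m m K) :
    capelliTrace a x = ∑ σ : Equiv.Perm (Fin n),
      Equiv.Perm.sign σ • (List.ofFn fun t ↦ a t * x (σ t)).prod.trace := by
  simp [capelliTrace, MultilinearMap.alternatization_apply]

theorem prod_ofFn_single_mul (i j : Fin (n + 1) → m) (x : Fin (n + 1) → Matrix m m K) :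
    (List.ofFn fun t ↦ Matrix.single (j t) (i t) 1 * x t).prod =
      (∏ t : Fin n, x t.castSucc (i t.castSucc) (j t.succ)) •
        (Matrix.single (j 0) (i (Fin.last n)) 1 * x (Fin.last n)) := by
  induction n with
  | zero => simp
  | succ n ih =>
    rw [List.ofFn_succ, List.prod_cons, ih (fun t ↦ i t.succ) (fun t ↦ j t.succ),
      Fin.prod_univ_succ, mul_smul_comm, ← mul_assoc, Matrix.single_mul_mul_single,
      ← smul_mul_assoc, ← smul_mul_assoc, Matrix.smul_single, Matrix.smul_single]
    simp [mul_comm]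

theorem trace_prod_ofFn_single_mul (i j : Fin (n + 1) → m) (x : Fin (n + 1) → Matrix m m K) :
    (List.ofFn fun t ↦ Matrix.single (j t) (i t) 1 * x t).prod.trace =
      ∏ t, x t (i t) (j (t + 1)) := by
  rw [prod_ofFn_single_mul, Matrix.trace_smul, Matrix.trace_single_mul, one_smul,
    Fin.prod_univ_castSucc, Fin.last_add_one, smul_eq_mul]
  simp only [Fin.coeSucc_eq_succ]

theorem exists_capelliTrace_ne_zero [Nonempty m] (b : Module.Basis (Fin n) K (Matrix m m K)) :
    ∃ c : Fin n → Fin n, capelliTrace (b ∘ c) b ≠ 0 := by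
  by_contra! hzero
  have hzero (a : Fin n → Matrix m m K) : capelliTrace a b = 0 := by
    let f : MultilinearMap K (fun _ : Fin n ↦ Matrix m m K) K :=
      ∑ σ : Equiv.Perm (Fin n), Equiv.Perm.sign σ • (Matrix.traceLinearMap m K K).compMultilinearMap
        ((MultilinearMap.mkPiAlgebraFin K n (Matrix m m K)).compLinearMap
          fun t ↦ LinearMap.mulRight K (b (σ t)))
    have hf (a) : f a = capelliTrace a b := by simp [f, capelliTrace_apply]
    have hf0 : f = 0 := Module.Basis.ext_multilinear (fun _ ↦ b) fun c ↦ (hf _).trans (hzero c)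
    rw [← hf, hf0, zero_apply]
  have hcard : n = Fintype.card m * Fintype.card m := by
    simpa [Module.finrank_matrix] using (Module.finrank_eq_card_basis b).symm
  obtain ⟨n, rfl⟩ : ∃ l, n = l + 1 :=
    Nat.exists_eq_succ_of_ne_zero (hcard ▸ (Nat.mul_pos Fintype.card_pos Fintype.card_pos).ne')
  let e : Fin (n + 1) ≃ m × m := Fintype.equivOfCardEq (by simpa using hcard)
  have hdet : (Matrix.of fun s t ↦ b s (e t).1 (e t).2).det ≠ 0 := by
    rw [← isUnit_iff_ne_zero, ← Matrix.isUnit_iff_isUnit_det,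
      ← Matrix.linearIndependent_rows_iff_isUnit]
    exact b.linearIndependent.map' _
      ((LinearEquiv.curry K K m m).symm.trans (LinearEquiv.funCongrLeft K K e)).ker
  apply hdet
  -- Matrix units chain the traces of the Capelli sum into the terms of the Leibniz formula.
  rw [← hzero fun t ↦ Matrix.single (e (t - 1)).2 (e t).1 1, capelliTrace_apply, Matrix.det_apply]
  refine Finset.sum_congr rfl fun σ _ ↦ congrArg _ ?_
  rw [trace_prod_ofFn_single_mul (fun t ↦ (e t).1) fun t ↦ (e (t - 1)).2]
  simp only [add_sub_cancel_right, Matrix.of_apply]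

end Capelli

section TraceDual

variable {K m : Type*} [Field K] [Fintype m] {n : ℕ}

theorem list_prod_mul_mem {R : Type*} [Ring R] {T : NonUnitalSubring R} {l : List R} {y : R}
    (hl : ∀ x ∈ l, x ∈ T) (hy : y ∈ T) : l.prod * y ∈ T := by
  induction l with
  | nil => simpa using hy
  | cons x l ih =>
    rw [List.forall_mem_cons] at hl
    rw [List.prod_cons, mul_assoc]
    exact T.mul_mem hl.1 (ih hl.2)

theorem exists_trace_prod_update_eq [DecidableEq m] {T : NonUnitalSubring (Matrix m m K)}
    {a x : Fin n → Matrix m m K} (ha : ∀ t, a t ∈ T) (hx : ∀ t, x t ∈ T) (i : Fin n) :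
    ∃ D ∈ T, ∀ w, (List.ofFn fun t ↦ a t * Function.update x i w t).prod.trace =
      (w * D).trace := by
  let l := List.ofFn fun t ↦ a t * x t
  have hl : ∀ y ∈ l, y ∈ T := List.forall_mem_ofFn_iff.2 fun t ↦ T.mul_mem (ha t) (hx t)
  refine ⟨(l.drop (i + 1)).prod * ((l.take i).prod * a i),
    list_prod_mul_mem (fun y hy ↦ hl y (List.mem_of_mem_drop hy))
      (list_prod_mul_mem (fun y hy ↦ hl y (List.mem_of_mem_take hy)) (ha i)), fun w ↦ ?_⟩
  have hset : (List.ofFn fun t ↦ a t * Function.update x i w t) = l.set i (a i * w) := by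
    refine List.ext_getElem (by simp [l]) fun t _ _ ↦ ?_
    by_cases hti : t = i
    · simp [hti]
    · simp [l, Function.update_apply, Fin.ext_iff, hti, Ne.symm hti]
  rw [hset, List.prod_set, if_pos (by simp [l]), Matrix.trace_mul_comm w]
  simp only [← mul_assoc]
  rw [Matrix.trace_mul_comm]
  simp only [mul_assoc]

theorem exists_trace_dual [Nonempty m] {T : NonUnitalSubring (Matrix m m K)}
    (b : Module.Basis (Fin n) K (Matrix m m K)) (hb : ∀ i, b i ∈ T) :
    ∃ d : K, d ≠ 0 ∧ ∃ D : Fin n → Matrix m m K, (∀ i, D i ∈ T) ∧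
      ∀ i j, (b j * D i).trace = if i = j then d else 0 := by
  classical
  obtain ⟨c, hc⟩ := exists_capelliTrace_ne_zero b
  choose D hDT hD using fun (i : Fin n) (σ : Equiv.Perm (Fin n)) ↦
    exists_trace_prod_update_eq (fun t ↦ hb (c t)) (fun t ↦ hb (σ t)) (σ.symm i)
  have htrace (i : Fin n) (w : Matrix m m K) :
      (w * ∑ σ, (Equiv.Perm.sign σ : ℤ) • D i σ).trace =
        capelliTrace (b ∘ c) (Function.update b i w) := by
    rw [capelliTrace_apply, Finset.mul_sum, Matrix.trace_sum]
    refine Finset.sum_congr rfl fun σ _ ↦ ?_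
    rw [mul_smul_comm, Matrix.trace_smul, ← hD, ← Function.comp_def b σ,
      ← Function.update_comp_equiv]
    rfl
  refine ⟨_, hc, fun i ↦ ∑ σ, (Equiv.Perm.sign σ : ℤ) • D i σ,
    fun i ↦ sum_mem fun σ _ ↦ zsmul_mem (hDT i σ) _, fun i j ↦ ?_⟩
  rw [htrace]
  split_ifs with hij
  · rw [← hij, Function.update_eq_self]
  · exact (capelliTrace _).map_update_self _ hij

variable {b : Module.Basis (Fin n) K (Matrix m m K)} {d : K} {D : Fin n → Matrix m m K}

theorem smul_eq_sum_trace_smul (h : ∀ i j, (b j * D i).trace = if i = j then d else 0)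
    (x : Matrix m m K) : d • x = ∑ i, (x * D i).trace • b i := by
  classical
  have hmap : d • LinearMap.id = ∑ i, ((Matrix.traceLinearMap m K K).comp
      (LinearMap.mulRight K (D i))).smulRight (b i) :=
    b.ext fun j ↦ by simp [LinearMap.sum_apply, h]
  simpa [LinearMap.sum_apply] using LinearMap.congr_fun hmap x

theorem sum_apply_mul_apply [DecidableEq m]
    (h : ∀ i j, (b j * D i).trace = if i = j then d else 0) (p q r s : m) :
    ∑ i, b i p r * D i s q = if p = q ∧ r = s then d else 0 := by
  have := congrFun (congrFun (smul_eq_sum_trace_smul h (Matrix.single q s 1)) p) r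
  simp only [Matrix.smul_apply, Matrix.sum_apply, Matrix.trace_single_mul, smul_eq_mul,
    one_mul] at this
  simp only [mul_comm (b _ p r)]
  rw [← this, Matrix.single_apply]
  simp [eq_comm]

theorem sum_mul_mul_eq_trace_smul_one [DecidableEq m]
    (h : ∀ i j, (b j * D i).trace = if i = j then d else 0) (a : Matrix m m K) :
    ∑ i, b i * a * D i = (d * a.trace) • (1 : Matrix m m K) := by
  ext p q
  calc (∑ i, b i * a * D i) p q = ∑ s, ∑ r, a r s * ∑ i, b i p r * D i s q := by
        simp only [Matrix.sum_apply, Matrix.mul_apply, Finset.sum_mul, Finset.mul_sum]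
        rw [Finset.sum_comm]
        refine Finset.sum_congr rfl fun s _ ↦ ?_
        rw [Finset.sum_comm]
        exact Finset.sum_congr rfl fun r _ ↦ Finset.sum_congr rfl fun i _ ↦ by ring
    _ = ((d * a.trace) • (1 : Matrix m m K)) p q := by
        simp only [sum_apply_mul_apply h]
        by_cases hpq : p = q
        · simp [hpq, Matrix.trace, Finset.mul_sum, mul_comm]
        · simp [hpq]

end TraceDual

section CentralElement

theorem exists_basis_eq_comp {K ι V : Type*} [Field K] [AddCommGroup V] [Module K V]
    [Module.Finite K V] {f : ι → V} (hf : Submodule.span K (Set.range f) = ⊤) :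
    ∃ n, ∃ b : Module.Basis (Fin n) K V, ∃ s : Fin n → ι, ⇑b = f ∘ s := by
  let b := Module.Basis.ofSpan hf.ge
  have := Module.Finite.finite_basis b
  have hb (i) : b i ∈ Set.range f := Module.Basis.ofSpan_subset hf.ge ⟨i, rfl⟩
  choose s hs using hb
  let e := Finite.equivFin ((linearIndepOn_empty K id).extend (Set.empty_subset (Set.range f)))
  exact ⟨_, b.reindex e, s ∘ e.symm, funext fun i ↦
    (b.reindex_apply e i).trans (hs _).symm⟩

variable {F K A m : Type*} [Field F] [Field K] [Algebra F K] [NonUnitalRing A] [Module F A]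
  [Fintype m] {ψ : A →ₙₐ[F] Matrix m m K}

theorem finite_of_trace_dual (hψ : Function.Injective ψ) {n : ℕ}
    {b : Module.Basis (Fin n) K (Matrix m m K)} {s D : Fin n → A} (hb : ⇑b = ψ ∘ s) {d : K}
    (hd : d ≠ 0) (hD : ∀ i j, (b j * ψ (D i)).trace = if i = j then d else 0)
    (htrace : ∀ a, d * (ψ a).trace ∈ (algebraMap F K).range) : Module.Finite F A := by
  choose c hc using htrace
  have hsq (i : Fin n) : algebraMap F K (c (s i * D i)) = d * d := by
    rw [hc, map_mul, ← Function.comp_apply (f := ψ), ← hb, hD, if_pos rfl]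
  have hexpand (y : A) : y = ∑ i, ((c (s i * D i))⁻¹ * c (y * D i)) • s i := by
    apply hψ
    calc ψ y = (d * d)⁻¹ • d • ∑ i, (ψ y * ψ (D i)).trace • b i := by
          rw [← smul_eq_sum_trace_smul hD, smul_smul d, inv_smul_smul₀ (mul_ne_zero hd hd)]
      _ = _ := by
          rw [Finset.smul_sum, Finset.smul_sum, map_sum]
          refine Finset.sum_congr rfl fun i _ ↦ ?_
          rw [map_smul, ← algebraMap_smul K ((c (s i * D i))⁻¹ * c (y * D i)),
            map_mul (algebraMap F K), map_inv₀, hsq, hc, map_mul ψ, hb,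
            Function.comp_apply, smul_smul, smul_smul, mul_assoc]
  refine ⟨Submodule.fg_def.2 ⟨Set.range s, Set.finite_range s, eq_top_iff.2 fun y _ ↦ ?_⟩⟩
  rw [hexpand y]
  exact sum_mem fun i _ ↦ Submodule.smul_mem _ _ (Submodule.subset_span ⟨i, rfl⟩)

theorem exists_central_of_span_range_eq_top (hψ : Function.Injective ψ)
    (hspan : Submodule.span K (Set.range ψ) = ⊤) (hinf : ¬ Module.Finite F A) :
    ∃ z : A, (∀ s, z * s = s * z) ∧ ∀ c : F, ∃ s, z * s ≠ c • s := by
  classical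
  have : Nontrivial A := not_subsingleton_iff_nontrivial.1 fun _ ↦ hinf inferInstance
  have : Nonempty m := by
    by_contra! h
    exact not_subsingleton A hψ.subsingleton
  obtain ⟨n, b, s, hb⟩ := exists_basis_eq_comp hspan
  obtain ⟨d, hd, D', hD', hdual⟩ := exists_trace_dual (T := (ψ : A →ₙ+* Matrix m m K).range) b
    fun i ↦ ⟨s i, congrFun hb.symm i⟩
  choose D hDD' using hD'
  obtain rfl : ψ ∘ D = D' := funext hDD'
  -- `∑ sᵢ a Dᵢ` acts as the scalar `d tr(a)`, so it is central.
  by_contra! hscalar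
  refine hinf (finite_of_trace_dual hψ hb hd hdual fun a ↦ ?_)
  have ht : ψ (∑ i, s i * a * D i) = (d * (ψ a).trace) • 1 := by
    rw [← sum_mul_mul_eq_trace_smul_one hdual, map_sum, hb]
    simp only [map_mul, Function.comp_apply]
  obtain ⟨c, hc⟩ := hscalar (∑ i, s i * a * D i) fun x ↦ hψ <| by
    rw [map_mul, map_mul, ht, smul_one_mul, mul_smul_one]
  obtain ⟨x, hx⟩ := exists_ne (0 : A)
  refine ⟨c, smul_left_injective K ((map_ne_zero_iff ψ hψ).2 hx) ?_⟩
  simp only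
  rw [algebraMap_smul, ← map_smul, ← hc, map_mul, ht, smul_one_mul]

variable [IsScalarTower F A A] [SMulCommClass F A A] {V : Submodule F A} {C : ℕ}

theorem IsPrimeRng.exists_central [IsAlgClosed F] (hA : IsPrimeRng A) (hV : HasLinearGrowth V C)
    (hinf : ¬ Module.Finite F A) :
    ∃ z : A, (∀ s, z * s = s * z) ∧ ∀ c : F, ∃ s, z * s ≠ c • s := by
  have : Nontrivial A := not_subsingleton_iff_nontrivial.1 fun _ ↦ hinf inferInstance
  obtain ⟨n, φ, hφ⟩ := hV.exists_matrix_embedding hA hinf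
  let e := Matrix.toLinAlgEquiv' (R := AlgebraicClosure (RatFunc F)) (n := Fin n)
  obtain ⟨m, ψ, hψ, hspan⟩ := hA.exists_span_range_eq_top
    (φ := (e.toAlgHom.restrictScalars F).toNonUnitalAlgHom.comp φ) (e.injective.comp hφ)
  exact exists_central_of_span_range_eq_top hψ hspan hinf

end CentralElement

section GrowthTransfer

variable {F A B : Type*} [Field F] [NonUnitalRing A] [Module F A]
  [IsScalarTower F A A] [SMulCommClass F A A] [NonUnitalRing B] [Module F B]
  [IsScalarTower F B B] [SMulCommClass F B B]

theorem exists_mem_prodFiltration_of_mem_adjoin {X : Set A} {x : A}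
    (hx : x ∈ NonUnitalAlgebra.adjoin F X) : ∃ n, x ∈ prodFiltration (Submodule.span F X) n := by
  induction hx using NonUnitalAlgebra.adjoin_induction with
  | mem x hx => exact ⟨0, Submodule.subset_span hx⟩
  | zero => exact ⟨0, zero_mem _⟩
  | add x y _ _ hx hy =>
    obtain ⟨m, hm⟩ := hx
    obtain ⟨n, hn⟩ := hy
    exact ⟨max m n, add_mem (prodFiltration_mono _ (le_max_left m n) hm)
      (prodFiltration_mono _ (le_max_right m n) hn)⟩
  | mul x y _ _ hx hy =>
    obtain ⟨m, hm⟩ := hx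
    obtain ⟨n, hn⟩ := hy
    exact ⟨_, mul_mem_prodFiltration hm hn⟩
  | smul c x _ hx => exact hx.imp fun _ ↦ Submodule.smul_mem _ c

theorem map_prodFiltration (f : A →ₙₐ[F] B) (V : Submodule F A) (n : ℕ) :
    (prodFiltration V n).map (f : A →ₗ[F] B) = prodFiltration (V.map (f : A →ₗ[F] B)) n := by
  induction n with
  | zero => rfl
  | succ n ih =>
    have hmul : (LinearMap.mul F A).compr₂ (f : A →ₗ[F] B) =
        (LinearMap.mul F B).compl₁₂ (f : A →ₗ[F] B) (f : A →ₗ[F] B) :=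
      LinearMap.ext₂ (map_mul f)
    rw [prodFiltration, prodFiltration, Submodule.map_sup, Submodule.map_map₂, ← ih,
      Submodule.map₂_map_map, hmul]

end GrowthTransfer

section PrimeSubalgebra

variable {F B : Type*} [Field F] [Ring B] [Algebra F B] {S : NonUnitalSubalgebra F B}

/-- `I` is a two-sided ideal of the subalgebra `S` of an arbitrary algebra; for subalgebras of
`M_N(W)` this unfolds to `IsIdealOf`. -/
def IsIdealIn (S : NonUnitalSubalgebra F B) (I : Set B) : Prop :=
  I ⊆ S ∧ (0 : B) ∈ I ∧ (∀ x y, x ∈ I → y ∈ I → x + y ∈ I) ∧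
    (∀ x ∈ I, -x ∈ I) ∧ ∀ x ∈ I, ∀ a ∈ S, a * x ∈ I ∧ x * a ∈ I

/-- The subalgebra `S` is prime, in terms of products of ideals; for subalgebras of `M_N(W)` this
unfolds to `IsPrimeAlg`. -/
def IsPrimeIn (S : NonUnitalSubalgebra F B) : Prop :=
  ∀ I J : Set B, IsIdealIn S I → IsIdealIn S J →
    (∀ x ∈ I, ∀ y ∈ J, x * y = 0) → I ⊆ {0} ∨ J ⊆ {0}

theorem IsIdealIn.leftAnnihilator {T : Set B} (hT : ∀ s ∈ S, ∀ y ∈ T, s * y ∈ T) :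
    IsIdealIn S {t | t ∈ S ∧ ∀ y ∈ T, t * y = 0} := by
  refine ⟨fun t ht ↦ ht.1, ⟨zero_mem S, fun y _ ↦ zero_mul y⟩,
    fun t u ht hu ↦ ⟨add_mem ht.1 hu.1, fun y hy ↦ ?_⟩,
    fun t ht ↦ ⟨neg_mem ht.1, fun y hy ↦ ?_⟩,
    fun t ht s hs ↦ ⟨⟨mul_mem hs ht.1, fun y hy ↦ ?_⟩, ⟨mul_mem ht.1 hs, fun y hy ↦ ?_⟩⟩⟩
  · rw [add_mul, ht.2 y hy, hu.2 y hy, add_zero]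
  · rw [neg_mul, ht.2 y hy, neg_zero]
  · rw [mul_assoc, ht.2 y hy, mul_zero]
  · rw [mul_assoc, ht.2 _ (hT s hs y hy)]

theorem IsIdealIn.rightAnnihilator {T : Set B} (hT : ∀ s ∈ S, ∀ y ∈ T, y * s ∈ T) :
    IsIdealIn S {t | t ∈ S ∧ ∀ y ∈ T, y * t = 0} := by
  refine ⟨fun t ht ↦ ht.1, ⟨zero_mem S, fun y _ ↦ mul_zero y⟩,
    fun t u ht hu ↦ ⟨add_mem ht.1 hu.1, fun y hy ↦ ?_⟩,
    fun t ht ↦ ⟨neg_mem ht.1, fun y hy ↦ ?_⟩,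
    fun t ht s hs ↦ ⟨⟨mul_mem hs ht.1, fun y hy ↦ ?_⟩, ⟨mul_mem ht.1 hs, fun y hy ↦ ?_⟩⟩⟩
  · rw [mul_add, ht.2 y hy, hu.2 y hy, add_zero]
  · rw [mul_neg, ht.2 y hy, neg_zero]
  · rw [← mul_assoc, ht.2 _ (hT s hs y hy)]
  · rw [← mul_assoc, ht.2 y hy, zero_mul]

theorem IsPrimeIn.isPrimeRng (hS : IsPrimeIn S) : IsPrimeRng S := by
  have hS0 : IsIdealIn S {t | t ∈ S ∧ ∀ s ∈ (S : Set B), t * s = 0} :=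
    .leftAnnihilator fun _ hs _ ht ↦ mul_mem hs ht
  have hann {x : B} (hx : x ∈ S) (hxS : ∀ s ∈ S, x * s = 0) : x = 0 :=
    (hS _ _ hS0 hS0 fun t ht u hu ↦ ht.2 u hu.1).elim (· ⟨hx, hxS⟩) (· ⟨hx, hxS⟩)
  rintro ⟨x, hx⟩ ⟨y, hy⟩ hxy
  have hJ : IsIdealIn S {t | t ∈ S ∧ ∀ w ∈ {w | ∃ s ∈ S, w = x * s}, w * t = 0} :=
    .rightAnnihilator fun s hs _ ⟨u, hu, hw⟩ ↦ ⟨u * s, mul_mem hu hs, by rw [hw, mul_assoc]⟩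
  have hI := IsIdealIn.leftAnnihilator fun s hs t ht ↦ (hJ.2.2.2.2 t ht s hs).1
  refine (hS _ _ hI hJ fun t ht u hu ↦ ht.2 u hu).imp (fun hI0 ↦ Subtype.ext ?_)
    fun hJ0 ↦ Subtype.ext ?_
  · exact hann hx fun s hs ↦ hI0 ⟨mul_mem hx hs, fun t ht ↦ ht.2 _ ⟨s, hs, rfl⟩⟩
  · exact hJ0 ⟨hy, fun _ ⟨s, hs, hw⟩ ↦ hw ▸ congrArg Subtype.val (hxy ⟨s, hs⟩)⟩

theorem exists_hasLinearGrowth {X : Set B} {C : ℕ} (hX : NonUnitalAlgebra.adjoin F X = S)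
    (hC : ∀ m, Module.rank F (prodFiltration (Submodule.span F X) m) ≤ (C * (m + 1) : ℕ)) :
    ∃ V : Submodule F S, HasLinearGrowth V C := by
  have hXS : X ⊆ S := hX ▸ NonUnitalAlgebra.subset_adjoin F
  let ι := NonUnitalSubalgebraClass.subtype S
  have hι : Function.Injective (ι : S →ₗ[F] B) := Subtype.val_injective
  let V := (Submodule.span F X).comap (ι : S →ₗ[F] B)
  have hV (m : ℕ) : (prodFiltration V m).map (ι : S →ₗ[F] B) =
      prodFiltration (Submodule.span F X) m := by
    rw [map_prodFiltration, Submodule.map_comap_eq_of_le]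
    exact Submodule.span_le.2 fun x hx ↦ ⟨⟨x, hXS hx⟩, rfl⟩
  refine ⟨V, fun x ↦ ?_, fun m ↦ ?_⟩
  · obtain ⟨m, hm⟩ := exists_mem_prodFiltration_of_mem_adjoin (hX.ge x.2)
    rw [← hV] at hm
    exact ⟨m, hι.mem_set_image.1 hm⟩
  · rw [← rank_map_eq hι, hV]
    exact hC m

theorem IsPrimeIn.exists_central_mem [IsAlgClosed F] (hS : IsPrimeIn S)
    {X : Set B} {C : ℕ} (hX : NonUnitalAlgebra.adjoin F X = S)
    (hC : ∀ m, Module.rank F (prodFiltration (Submodule.span F X) m) ≤ (C * (m + 1) : ℕ))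
    (hinf : ¬ Module.Finite F S) :
    ∃ z ∈ S, (∀ s ∈ S, z * s = s * z) ∧ ∀ c : F, z ≠ algebraMap F B c := by
  obtain ⟨V, hV⟩ := exists_hasLinearGrowth hX hC
  obtain ⟨⟨z, hzS⟩, hz, hzF⟩ := hS.isPrimeRng.exists_central hV hinf
  refine ⟨z, hzS, fun s hs ↦ congrArg Subtype.val (hz ⟨s, hs⟩), ?_⟩
  rintro c rfl
  obtain ⟨s, hs⟩ := hzF c
  exact hs (Subtype.ext (Algebra.smul_def c (s : B)).symm)

end PrimeSubalgebra

section WeylGrowth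

variable {F : Type*} [Field F] {n : ℕ} {S : NonUnitalSubalgebra F (MW F n)}

theorem span_prodsUpTo (X : Set (MW F n)) (m : ℕ) :
    Submodule.span F (prodsUpTo X m) = prodFiltration (Submodule.span F X) m := by
  induction m with
  | zero => rfl
  | succ m ih =>
    have himage : {z | ∃ x ∈ prodsUpTo X m, ∃ y ∈ X, z = x * y} =
        Set.image2 (LinearMap.mul F (MW F n) · ·) (prodsUpTo X m) X := by
      simp only [Set.image2, LinearMap.mul_apply', eq_comm]
    rw [prodsUpTo, prodFiltration, ← ih, Submodule.map₂_span_span, Submodule.span_union, himage]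

theorem IsPrimeAlg.isPrimeIn (hS : IsPrimeAlg S) :
    IsPrimeIn (F := F) (B := MW F n) S := hS

theorem prodsUpTo_subset {X : Set (MW F n)} (hX : X ⊆ S) (m : ℕ) : prodsUpTo X m ⊆ S := by
  induction m with
  | zero => exact hX
  | succ m ih =>
    rintro _ (hx | ⟨x, hx, y, hy, rfl⟩)
    · exact ih hx
    · exact mul_mem (ih hx) (hX hy)

theorem GKdimOne.not_finite (hS : GKdimOne S) : ¬ Module.Finite F S := by
  intro hfin
  have : Module.Finite F S.toSubmodule := hfin
  obtain ⟨X, hX, hrank⟩ := hS.2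
  obtain ⟨m, hm⟩ := hrank (Module.finrank F S.toSubmodule)
  rw [Module.finrank_eq_rank] at hm
  exact hm (Submodule.rank_mono (Submodule.span_le.2 (prodsUpTo_subset hX m)))

end WeylGrowth

section InnerDerivation

theorem diagonal_mul_sub_mul_eq_one {m R : Type*} [Fintype m] [DecidableEq m] [Ring R] {p q : R}
    (hqp : q * p - p * q = 1) :
    Matrix.diagonal (fun _ : m ↦ q) * Matrix.diagonal (fun _ ↦ p) -
      Matrix.diagonal (fun _ ↦ p) * Matrix.diagonal (fun _ ↦ q) = 1 := by
  rw [Matrix.diagonal_mul_diagonal, Matrix.diagonal_mul_diagonal, Matrix.diagonal_sub]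
  simp only [hqp, Matrix.diagonal_one]

variable (F : Type*) {R : Type*} [Field F] [Ring R] [Algebra F R]

/-- The inner derivation `a ↦ [a, p] = ap - pa`; for `p` in `M_N(W)` this is `dq`. -/
def commutatorWith (p : R) : Module.End F R :=
  LinearMap.mulRight F p - LinearMap.mulLeft F p

variable {F}

theorem commutatorWith_apply (p a : R) : commutatorWith F p a = a * p - p * a := rfl

theorem commutatorWith_mul (p a b : R) :
    commutatorWith F p (a * b) = a * commutatorWith F p b + commutatorWith F p a * b := by
  simp only [commutatorWith_apply]
  noncomm_ring

theorem pow_commutatorWith_mul_eq_zero {p : R} {m n : ℕ} {a b : R}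
    (ha : (commutatorWith F p ^ m) a = 0) (hb : (commutatorWith F p ^ n) b = 0) :
    (commutatorWith F p ^ (m + n)) (a * b) = 0 := by
  induction hl : m + n generalizing m n a b with
  | zero =>
    obtain ⟨rfl, rfl⟩ := Nat.add_eq_zero_iff.1 hl
    rw [show a = 0 from ha, zero_mul, map_zero]
  | succ l ih =>
    rw [pow_succ, Module.End.mul_apply, commutatorWith_mul, map_add]
    cases m with
    | zero => rw [show a = 0 from ha, map_zero, zero_mul, zero_mul, map_zero, add_zero]
    | succ m =>
      cases n with
      | zero => rw [show b = 0 from hb, map_zero, mul_zero, mul_zero, map_zero, add_zero]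
      | succ n =>
        have hb' : (commutatorWith F p ^ n) (commutatorWith F p b) = 0 := by
          rwa [← Module.End.mul_apply, ← pow_succ]
        have ha' : (commutatorWith F p ^ m) (commutatorWith F p a) = 0 := by
          rwa [← Module.End.mul_apply, ← pow_succ]
        rw [ih ha hb' (by omega), ih ha' hb (by omega), add_zero]

theorem exists_pow_commutatorWith_eq_zero_of_mem_adjoin {p q a : R} (hqp : q * p - p * q = 1)
    (ha : a ∈ Algebra.adjoin F {p, q}) : ∃ n, (commutatorWith F p ^ n) a = 0 := by
  induction ha using Algebra.adjoin_induction with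
  | mem x hx =>
    obtain rfl | rfl := hx
    · exact ⟨1, by rw [pow_one, commutatorWith_apply, sub_self]⟩
    · exact ⟨2, by rw [pow_two, Module.End.mul_apply, commutatorWith_apply p x, hqp,
        commutatorWith_apply, one_mul, mul_one, sub_self]⟩
  | algebraMap r =>
    exact ⟨1, by rw [pow_one, commutatorWith_apply, Algebra.commutes, sub_self]⟩
  | add x y _ _ hx hy =>
    obtain ⟨m, hm⟩ := hx
    obtain ⟨n, hn⟩ := hy
    refine ⟨max m n, ?_⟩
    rw [map_add, Module.End.pow_map_zero_of_le (le_max_left m n) hm,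
      Module.End.pow_map_zero_of_le (le_max_right m n) hn, add_zero]
  | mul x y _ _ hx hy =>
    obtain ⟨m, hm⟩ := hx
    obtain ⟨n, hn⟩ := hy
    exact ⟨m + n, pow_commutatorWith_mul_eq_zero hm hn⟩

theorem coe_pow_commutatorWith {W : Subalgebra F R} (p a : W) (n : ℕ) :
    ((commutatorWith F p ^ n) a : R) = (commutatorWith F (p : R) ^ n) a := by
  induction n with
  | zero => rfl
  | succ n ih =>
    rw [pow_succ', pow_succ', Module.End.mul_apply, Module.End.mul_apply, ← ih]
    rfl

theorem pow_commutatorWith_diagonal_apply {m : Type*} [Fintype m] [DecidableEq m] (p : R)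
    (a : Matrix m m R) (n : ℕ) (i j : m) :
    (commutatorWith F (Matrix.diagonal fun _ ↦ p) ^ n) a i j =
      (commutatorWith F p ^ n) (a i j) := by
  induction n with
  | zero => rfl
  | succ n ih =>
    rw [pow_succ', pow_succ', Module.End.mul_apply, Module.End.mul_apply, ← ih,
      commutatorWith_apply, commutatorWith_apply, Matrix.sub_apply, Matrix.mul_diagonal,
      Matrix.diagonal_mul]

theorem exists_pow_commutatorWith_diagonal_eq_zero {m : Type*} [Fintype m] [DecidableEq m] {p : R}
    (hp : ∀ a : R, ∃ n, (commutatorWith F p ^ n) a = 0) (a : Matrix m m R) :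
    ∃ n, (commutatorWith F (Matrix.diagonal fun _ ↦ p) ^ n) a = 0 := by
  choose n hn using fun ij : m × m ↦ hp (a ij.1 ij.2)
  refine ⟨Finset.univ.sup n, Matrix.ext fun i j ↦ ?_⟩
  rw [pow_commutatorWith_diagonal_apply]
  exact Module.End.pow_map_zero_of_le (Finset.le_sup (Finset.mem_univ (i, j))) (hn (i, j))

variable {S : NonUnitalSubalgebra F R} {p : R}

theorem commutatorWith_commute (hS : ∀ s ∈ S, commutatorWith F p s ∈ S) {z : R}
    (hz : ∀ s ∈ S, Commute z s) {s : R} (hs : s ∈ S) : Commute (commutatorWith F p z) s := by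
  have h : commutatorWith F p (z * s) = commutatorWith F p (s * z) := by rw [(hz s hs).eq]
  rw [commutatorWith_mul, commutatorWith_mul, (hz _ (hS s hs)).eq, add_comm] at h
  exact add_right_cancel h

theorem exists_mem_center_commutatorWith_eq_one (hS : ∀ s ∈ S, commutatorWith F p s ∈ S)
    (hcent : ∀ z, (∀ s ∈ S, Commute z s) → Commute z p → ∃ c : F, z = algebraMap F R c) {z : R}
    (hzS : z ∈ S) (hz : ∀ s ∈ S, Commute z s) (hzF : ∀ c : F, z ≠ algebraMap F R c)
    (hnil : ∃ n, (commutatorWith F p ^ n) z = 0) :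
    ∃ w ∈ S, (∀ s ∈ S, Commute w s) ∧ commutatorWith F p w = 1 := by
  obtain ⟨n, hn⟩ := hnil
  induction n generalizing z with
  | zero => exact absurd (hn.trans (map_zero _).symm) (hzF 0)
  | succ n ih =>
    rw [pow_succ, Module.End.mul_apply] at hn
    by_cases hscalar : ∃ c : F, commutatorWith F p z = algebraMap F R c
    · obtain ⟨c, hc⟩ := hscalar
      have hc0 : c ≠ 0 := by
        rintro rfl
        obtain ⟨c', hc'⟩ := hcent z hz (sub_eq_zero.1 (hc.trans (map_zero _)))
        exact hzF c' hc'
      refine ⟨c⁻¹ • z, S.smul_mem _ hzS, fun s hs ↦ (hz s hs).smul_left _, ?_⟩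
      rw [map_smul, hc, Algebra.algebraMap_eq_smul_one, inv_smul_smul₀ hc0]
    · exact ih (hS z hzS) (fun s hs ↦ commutatorWith_commute hS hz hs) (not_exists.1 hscalar) hn

theorem exists_add_mem_center {q : R} (hS : ∀ s ∈ S, s * p - p * s ∈ S)
    (hcent : ∀ z, (∀ n : ℕ, ∀ s ∈ S, z * (p ^ n * s) = p ^ n * s * z) →
      ∃ c : F, z = algebraMap F R c) (hqp : q * p - p * q = 1) {z : R}
    (hzS : z ∈ S) (hz : ∀ s ∈ S, z * s = s * z) (hzF : ∀ c : F, z ≠ algebraMap F R c)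
    (hnil : ∃ n, (commutatorWith F p ^ n) z = 0) :
    ∃ d, q + d ∈ S ∧ (∀ s ∈ S, (q + d) * s = s * (q + d)) ∧ d * p = p * d := by
  obtain ⟨w, hwS, hw, hwp⟩ := exists_mem_center_commutatorWith_eq_one hS
    (fun z hz hzp ↦ hcent z fun n s hs ↦ (hzp.pow_right n).mul_right (hz s hs)) hzS hz hzF hnil
  have hd : commutatorWith F p (w - q) = 0 := by
    rw [map_sub, hwp, commutatorWith_apply, hqp, sub_self]
  refine ⟨w - q, ?_, ?_, sub_eq_zero.1 hd⟩ <;> rw [add_sub_cancel]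
  exacts [hwS, hw]

end InnerDerivation

section Weyl

variable {F : Type*} [Field F] {n : ℕ}

theorem qW_mul_pW_sub : qW F * pW F - pW F * qW F = 1 := by
  refine Subtype.ext (LinearMap.ext fun f ↦ ?_)
  change derivative (X * f) - X * derivative f = f
  rw [derivative_mul, derivative_X, one_mul, add_sub_cancel_right]

theorem polyP_apply (f g : F[X]) : (polyP F f : Module.End F F[X]) g = f * g := by
  have hp : LinearMap.mulLeft F (X : F[X]) = Algebra.lmul F F[X] X := rfl
  have h : (WeylA F).val.comp (polyP F) = Algebra.lmul F F[X] := by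
    ext1
    simp [polyP, pW, pOp, hp]
  exact LinearMap.congr_fun (DFunLike.congr_fun h f) g

theorem exists_polyP_eq {w : WeylA F} (hw : w * pW F = pW F * w) : ∃ f, polyP F f = w := by
  have hX (g : F[X]) : (w : Module.End F F[X]) (X * g) = X * (w : Module.End F F[X]) g :=
    LinearMap.congr_fun (congrArg Subtype.val hw) g
  refine ⟨(w : Module.End F F[X]) 1, Subtype.ext (LinearMap.ext fun g ↦ ?_)⟩
  rw [polyP_apply]
  induction g using Polynomial.induction_on with
  | C a => rw [← mul_one (C a), ← smul_eq_C_mul, map_smul, mul_smul_comm, mul_one]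
  | add f g hf hg => rw [mul_add, hf, hg, map_add]
  | monomial m a ih => rw [pow_succ', mul_left_comm (C a), hX, ← ih, mul_left_comm]

theorem exists_map_polyP_eq {d : MW F n} (hd : d * pM F n = pM F n * d) :
    ∃ A : Matrix (Fin n) (Fin n) F[X], A.map (polyP F) = d := by
  have hentry (i j : Fin n) : d i j * pW F = pW F * d i j := by
    simpa only [pM, Matrix.mul_diagonal, Matrix.diagonal_mul] using congrFun (congrFun hd i) j
  choose A hA using fun i j ↦ exists_polyP_eq (hentry i j)
  exact ⟨Matrix.of A, Matrix.ext hA⟩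

theorem qM_mul_pM_sub : qM F n * pM F n - pM F n * qM F n = 1 :=
  diagonal_mul_sub_mul_eq_one (p := pW F) (q := qW F) qW_mul_pW_sub

theorem exists_pow_commutatorWith_pW_eq_zero (a : WeylA F) :
    ∃ m, (commutatorWith F (pW F) ^ m) a = 0 := by
  have hqp : qOp F * pOp F - pOp F * qOp F = 1 := congrArg Subtype.val qW_mul_pW_sub
  obtain ⟨m, hm⟩ := exists_pow_commutatorWith_eq_zero_of_mem_adjoin (F := F) hqp a.2
  exact ⟨m, Subtype.ext ((coe_pow_commutatorWith _ _ _).trans hm)⟩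

end Weyl

/-- Lemma 4.2.3: a finitely generated prime `∂_q`-invariant subalgebra
`S ⊆ M_N(W)` of GK dimension one whose envelope `k[p]·S` has trivial
centralizer contains a central element of the form `q + A(p)`. -/
theorem central_element_q_plus_A [IsAlgClosed k] (N : ℕ) (hN : 0 < N)
    (S : NonUnitalSubalgebra k (MW k N))
    (hdq : ∀ a ∈ S, dq k N a ∈ S)
    (hfg : ∃ F : Finset (MW k N), NonUnitalAlgebra.adjoin k (F : Set (MW k N)) = S)
    (hprime : IsPrimeAlg S)
    (hgk : GKdimOne S)
    (hcent : ∀ z : MW k N,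
      (∀ (n : ℕ), ∀ s ∈ S, z * (pM k N ^ n * s) = (pM k N ^ n * s) * z) →
      ∃ c : k, z = algebraMap k (MW k N) c) :
    ∃ A : Matrix (Fin N) (Fin N) (Polynomial k),
      qM k N + A.map (polyP k) ∈ S ∧
      ∀ s ∈ S, (qM k N + A.map (polyP k)) * s = s * (qM k N + A.map (polyP k)) := by
  obtain ⟨X, hX⟩ := hfg
  obtain ⟨C, hC⟩ := hgk.1 X (hX ▸ NonUnitalAlgebra.subset_adjoin k)
  obtain ⟨z, hzS, hz, hzk⟩ := hprime.isPrimeIn.exists_central_mem hX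
    (fun m ↦ span_prodsUpTo (X : Set (MW k N)) m ▸ hC m) hgk.not_finite
  obtain ⟨d, hdS, hd, hdp⟩ := exists_add_mem_center hdq hcent qM_mul_pM_sub hzS hz hzk
    (exists_pow_commutatorWith_diagonal_eq_zero exists_pow_commutatorWith_pW_eq_zero z)
  obtain ⟨A, rfl⟩ := exists_map_polyP_eq hdp
  exact ⟨A, hdS, hd⟩

end
end

section
/- Let θ be an automorphism of M_N(W), W the first Weyl algebra over an algebraically closed field k of characteristic zero, such that θ(p) = p. Then θ(q) = q - B(p) where B = h(p)·Id_N - Q^{-1}·Q' for some polynomial h ∈ k[p] and some matrix Q ∈ M_N(k[p]) invertible in M_N(k[p]), where Q' = ∂_p(Q); moreover the restriction of θ to M_N(k[p]) is conjugation by Q. -/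
open Polynomial

set_option synthInstance.maxHeartbeats 1000000
set_option maxHeartbeats 1000000

noncomputable section

variable (k : Type*) [Field k] [CharZero k]

variable (N : ℕ)

/-!
Since `θ` fixes `p`, it preserves the centralizer of `p`, which is `M_N(k[p])`, and it fixes the
scalars `k[p]`. By Morita theory an endomorphism of the `k[p]`-algebra `M_N(k[p])` is conjugation
by an invertible `Q`, because a direct summand of `k[p]^N` is free. The element
`θ(q) - Q⁻¹ q Q` then commutes with all of `M_N(k[p])`, so it is a scalar in `k[p]`; finally
`Q⁻¹ q Q = q + Q⁻¹ Q'`.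
-/

section SkolemNoether

variable {n R V : Type*} [Fintype n] [DecidableEq n] [AddCommGroup V]

open scoped Matrix.Module in
theorem nonempty_matrixLinearEquiv_pi_toModuleCatObj [Ring R] [module : Module R V]
    [Module (Matrix n n R) V] [IsScalarTower R (Matrix n n R) V] (i : n) :
    Nonempty (V ≃ₗ[Matrix n n R] (n → MatrixModCat.toModuleCatObj R V i)) := by
  have scalars : module = Module.compHom V (Matrix.scalar n) := Module.ext' _ _ fun r x ↦
    calc r • x = (r • (1 : Matrix n n R)) • x := by rw [smul_assoc, one_smul]
      _ = Matrix.scalar n r • x := by rw [Matrix.smul_one_eq_diagonal, Matrix.scalar_apply]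
  subst scalars
  exact ⟨toModuleCatFromModuleCatLinearEquiv R (.of (Matrix n n R) V) i⟩

variable [CommRing R] [IsDomain R] [IsPrincipalIdealRing R] [Module R V] [Module.Free R V]
  [Module.Finite R V]

open scoped Matrix.Module in
theorem nonempty_matrixLinearEquiv_of_finrank_eq_card [Module (Matrix n n R) V]
    [IsScalarTower R (Matrix n n R) V] (hV : Module.finrank R V = Fintype.card n) :
    Nonempty (V ≃ₗ[Matrix n n R] (n → R)) := by
  cases isEmpty_or_nonempty n with
  | inl _ =>
    have : Subsingleton V := Module.finrank_zero_iff.mp (hV.trans Fintype.card_eq_zero)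
    exact ⟨{ (0 : V →ₗ[Matrix n n R] (n → R)) with
      invFun := 0
      left_inv := fun _ ↦ Subsingleton.elim _ _
      right_inv := fun _ ↦ Subsingleton.elim _ _ }⟩
  | inr _ =>
    let i : n := Classical.arbitrary n
    let L := MatrixModCat.toModuleCatObj R V i
    obtain ⟨decomposition⟩ : Nonempty (V ≃ₗ[Matrix n n R] (n → L)) :=
      nonempty_matrixLinearEquiv_pi_toModuleCatObj i
    have finrank_L : Module.finrank R L = 1 := by
      have h := (decomposition.restrictScalars R).finrank_eq
      rw [hV, Module.finrank_pi_fintype, Finset.sum_const, Finset.card_univ, smul_eq_mul] at h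
      exact (Nat.eq_of_mul_eq_mul_left Fintype.card_pos (by rw [mul_one, ← h])).symm
    obtain ⟨e⟩ := Module.nonempty_linearEquiv_of_finrank_eq_one finrank_L
    let components : (n → L) ≃ₗ[Matrix n n R] (n → R) :=
      .ofLinearMap (e.symm.toLinearMap.mapMatrixModule n) (e.toLinearMap.mapMatrixModule n)
        (by ext; simp) (by ext; simp)
    exact ⟨decomposition.trans components⟩

open scoped Matrix.Module in
theorem exists_linearEquiv_intertwining_mulVec (φ : Matrix n n R →ₐ[R] Module.End R V)
    (hV : Module.finrank R V = Fintype.card n) :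
    ∃ e : V ≃ₗ[R] (n → R), ∀ A x, e (φ A x) = A.mulVec (e x) := by
  let : Module (Matrix n n R) V := Module.compHom V φ.toRingHom
  have : IsScalarTower R (Matrix n n R) V :=
    ⟨fun r A x ↦ congrArg (fun f : Module.End R V ↦ f x) (map_smul φ r A)⟩
  obtain ⟨e⟩ := nonempty_matrixLinearEquiv_of_finrank_eq_card hV
  exact ⟨e.restrictScalars R, e.map_smul⟩

theorem exists_algHom_matrix_eq_conj (φ : Matrix n n R →ₐ[R] Matrix n n R) :
    ∃ P : (Matrix n n R)ˣ, ∀ A, φ A = (↑P⁻¹ : Matrix n n R) * A * P := by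
  obtain ⟨e, he⟩ := exists_linearEquiv_intertwining_mulVec
    ((Matrix.toLinAlgEquiv' : _ ≃ₐ[R] _).toAlgHom.comp φ) (Module.finrank_fintype_fun_eq_card R)
  let P : (Matrix n n R)ˣ := Units.map (LinearMap.toMatrixAlgEquiv' : _ ≃ₐ[R] _).toMonoidHom
    (LinearMap.GeneralLinearGroup.ofLinearEquiv e)
  have P_mulVec (x : n → R) : P.val.mulVec x = e x := LinearMap.toMatrix'_mulVec e.toLinearMap x
  refine ⟨P, fun A ↦ ?_⟩
  rw [mul_assoc, Units.eq_inv_mul_iff_mul_eq]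
  refine Matrix.ext_of_mulVec_single fun i ↦ ?_
  rw [← Matrix.mulVec_mulVec, ← Matrix.mulVec_mulVec, P_mulVec, P_mulVec, ← he]
  rfl

end SkolemNoether

theorem commute_of_map_eq_add_map {A B : Type*} [Semiring A] [Ring B] (θ σ : A →+* B)
    {q a d : A} {c : B} (hc : θ q = c + σ q) (hq : q * a = a * q + d) (ha : θ a = σ a)
    (hd : θ d = σ d) : Commute c (σ a) := by
  have hθ : θ q * σ a = σ a * θ q + σ d := by rw [← ha, ← hd, ← map_mul, hq, map_add, map_mul]
  have hσ : σ q * σ a = σ a * σ q + σ d := by rw [← map_mul, hq, map_add, map_mul]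
  rw [hc, add_mul, hσ, mul_add, add_assoc] at hθ
  exact add_right_cancel hθ

section Weyl

variable {K : Type*} [Field K] {N : ℕ}

theorem coe_polyP_apply (f g : K[X]) : (polyP K f : Module.End K K[X]) g = f * g := by
  have h : (WeylA K).val.comp (polyP K) = Algebra.lmul K K[X] := by
    apply Polynomial.algHom_ext
    simp only [polyP, AlgHom.comp_apply, aeval_X]
    rfl
  exact congrArg (fun t : Module.End K K[X] ↦ t g) (DFunLike.congr_fun h f)

theorem polyP_injective : Function.Injective (polyP K) := fun f g h ↦ by
  simpa only [coe_polyP_apply, mul_one] using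
    congrArg (fun a : WeylA K ↦ (a : Module.End K K[X]) 1) h

theorem exists_polyP_eq_of_commute_pW {a : WeylA K} (h : Commute a (pW K)) :
    ∃ f, polyP K f = a := by
  have a_X_mul (g : K[X]) : (a : Module.End K K[X]) (X * g) = X * (a : Module.End K K[X]) g :=
    congrArg (fun t : WeylA K ↦ (t : Module.End K K[X]) g) h.eq
  have a_X_pow (n : ℕ) :
      (a : Module.End K K[X]) (X ^ n) = (a : Module.End K K[X]) 1 * X ^ n := by
    induction n with
    | zero => simp
    | succ n ih => rw [pow_succ', a_X_mul, ih, mul_left_comm]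
  refine ⟨(a : Module.End K K[X]) 1, Subtype.ext (Polynomial.lhom_ext' fun n ↦ ?_)⟩
  ext1
  simp [coe_polyP_apply, ← X_pow_eq_monomial, a_X_pow]

theorem qW_mul_polyP (f : K[X]) :
    qW K * polyP K f = polyP K f * qW K + polyP K (derivative f) := by
  refine Subtype.ext (LinearMap.ext fun g ↦ ?_)
  change derivative ((polyP K f : Module.End K K[X]) g) =
    (polyP K f : Module.End K K[X]) (derivative g) +
      (polyP K (derivative f) : Module.End K K[X]) g
  rw [coe_polyP_apply, coe_polyP_apply, coe_polyP_apply, derivative_mul, add_comm]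

variable (K N) in
/-- The embedding `M_N(k[p]) → M_N(W)` evaluating every entry at `p`. -/
def polyPM : Matrix (Fin N) (Fin N) K[X] →ₐ[K] MW K N := (polyP K).mapMatrix

theorem polyPM_injective : Function.Injective (polyPM K N) :=
  Matrix.map_injective polyP_injective

theorem polyPM_algebraMap_X : polyPM K N (algebraMap K[X] _ X) = pM K N := by
  simp [polyPM, pM, polyP, Matrix.algebraMap_eq_diagonal, Matrix.diagonal_map, Pi.algebraMap_def]

theorem commute_polyPM_pM (A : Matrix (Fin N) (Fin N) K[X]) :
    Commute (polyPM K N A) (pM K N) := by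
  rw [← polyPM_algebraMap_X]
  exact (Algebra.commute_algebraMap_right X A).map (polyPM K N)

theorem exists_polyPM_eq_of_commute_pM {a : MW K N} (h : Commute a (pM K N)) :
    ∃ A, polyPM K N A = a := by
  have entry (i j : Fin N) : Commute (a i j) (pW K) := by
    simpa only [pM, Matrix.mul_diagonal, Matrix.diagonal_mul, Commute, SemiconjBy] using
      congrFun₂ h.eq i j
  choose A hA using fun i j ↦ exists_polyP_eq_of_commute_pW (entry i j)
  exact ⟨Matrix.of A, Matrix.ext hA⟩

theorem exists_polyPM_smul_one_eq_of_forall_commute {a : MW K N}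
    (h : ∀ A, Commute a (polyPM K N A)) : ∃ g : K[X], polyPM K N (g • 1) = a := by
  obtain ⟨A, rfl⟩ := exists_polyPM_eq_of_commute_pM (polyPM_algebraMap_X (K := K) ▸ h _)
  have A_central (B) : Commute A B := polyPM_injective (by simpa only [map_mul] using (h B).eq)
  obtain ⟨g, rfl⟩ := Matrix.mem_range_scalar_of_commute_single fun _ _ _ ↦ (A_central _).symm
  exact ⟨g, by rw [Matrix.smul_one_eq_diagonal, Matrix.scalar_apply]⟩

theorem qM_mul_polyPM (A : Matrix (Fin N) (Fin N) K[X]) :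
    qM K N * polyPM K N A = polyPM K N A * qM K N + polyPM K N (A.map derivative) := by
  ext1 i j
  simpa only [qM, polyPM, AlgHom.mapMatrix_apply, Matrix.mul_diagonal, Matrix.diagonal_mul,
    Matrix.add_apply, Matrix.map_apply] using qW_mul_polyP (A i j)

theorem exists_algHom_polyPM_apply_eq {θ : MW K N →ₐ[K] MW K N} (hp : θ (pM K N) = pM K N) :
    ∃ φ : Matrix (Fin N) (Fin N) K[X] →ₐ[K[X]] Matrix (Fin N) (Fin N) K[X],
      ∀ A, polyPM K N (φ A) = θ (polyPM K N A) := by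
  have mem_range (A) : θ (polyPM K N A) ∈ (polyPM K N).range :=
    exists_polyPM_eq_of_commute_pM (by simpa only [hp] using (commute_polyPM_pM A).map θ)
  let ψ := (AlgEquiv.ofInjective _ polyPM_injective).symm.toAlgHom.comp
    ((θ.comp (polyPM K N)).codRestrict _ mem_range)
  have hψ (A) : polyPM K N (ψ A) = θ (polyPM K N A) :=
    congrArg Subtype.val ((AlgEquiv.ofInjective _ polyPM_injective).apply_symm_apply _)
  let scalars := IsScalarTower.toAlgHom K K[X] (Matrix (Fin N) (Fin N) K[X])
  have ψ_scalars : ψ.comp scalars = scalars := Polynomial.algHom_ext <| polyPM_injective <| by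
    change polyPM K N (ψ (algebraMap K[X] _ X)) = polyPM K N (algebraMap K[X] _ X)
    rw [hψ, polyPM_algebraMap_X, hp]
  exact ⟨{ ψ with commutes' := DFunLike.congr_fun ψ_scalars }, hψ⟩

theorem exists_map_polyPM_eq_conj {θ : MW K N →ₐ[K] MW K N} (hp : θ (pM K N) = pM K N) :
    ∃ Q : (Matrix (Fin N) (Fin N) K[X])ˣ,
      ∀ B, θ (polyPM K N B) = polyPM K N (Q⁻¹.val * B * Q.val) := by
  obtain ⟨φ, hφ⟩ := exists_algHom_polyPM_apply_eq hp
  obtain ⟨Q, hQ⟩ := exists_algHom_matrix_eq_conj φ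
  exact ⟨Q, fun B ↦ by rw [← hφ, hQ]⟩

theorem polyPM_inv_mul_qM_mul_polyPM (Q : (Matrix (Fin N) (Fin N) K[X])ˣ) :
    polyPM K N Q⁻¹.val * qM K N * polyPM K N Q.val =
      qM K N + polyPM K N (Q⁻¹.val * Q.val.map derivative) := by
  rw [mul_assoc, qM_mul_polyPM, mul_add, ← mul_assoc, ← map_mul, ← map_mul, Q.inv_mul, map_one,
    one_mul]

theorem commute_polyPM_of_map_qM_eq_add_conj {θ : MW K N →ₐ[K] MW K N}
    {Q : (Matrix (Fin N) (Fin N) K[X])ˣ} {c : MW K N}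
    (hc : θ (qM K N) = c + polyPM K N Q⁻¹.val * qM K N * polyPM K N Q.val)
    (hθ : ∀ B, θ (polyPM K N B) = polyPM K N (Q⁻¹.val * B * Q.val))
    (A : Matrix (Fin N) (Fin N) K[X]) : Commute c (polyPM K N A) := by
  let U : (MW K N)ˣ := Units.map (polyPM K N).toMonoidHom Q
  obtain ⟨σ, σ_apply⟩ : ∃ σ : MW K N →+* MW K N,
      ∀ x, σ x = polyPM K N Q⁻¹.val * x * polyPM K N Q.val :=
    ⟨MulSemiringAction.toRingHom _ _ (ConjAct.toConjAct U⁻¹), fun _ ↦ rfl⟩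
  have θ_eq_σ (B) : θ (polyPM K N B) = σ (polyPM K N B) := by
    rw [hθ, σ_apply, map_mul, map_mul]
  have A_eq : polyPM K N A = σ (polyPM K N (Q.val * A * Q⁻¹.val)) := by
    rw [← θ_eq_σ, hθ]
    simp only [mul_assoc, Q.inv_mul_cancel_left, Q.inv_mul, mul_one]
  rw [← σ_apply] at hc
  rw [A_eq]
  exact commute_of_map_eq_add_map (A := MW K N) (B := MW K N) θ.toRingHom σ hc
    (qM_mul_polyPM _) (θ_eq_σ _) (θ_eq_σ _)

theorem automorphism_fixing_p_on_weyl_general (θ : MW K N →ₐ[K] MW K N)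
    (hp : θ (pM K N) = pM K N) :
    ∃ (h : K[X]) (Q : (Matrix (Fin N) (Fin N) K[X])ˣ),
      θ (qM K N) = qM K N - polyPM K N (h • 1 - Q⁻¹.val * Q.val.map derivative) ∧
      ∀ B, θ (polyPM K N B) = polyPM K N (Q⁻¹.val * B * Q.val) := by
  obtain ⟨Q, hQ⟩ := exists_map_polyPM_eq_conj hp
  obtain ⟨c, hc⟩ : ∃ c, θ (qM K N) = c + polyPM K N Q⁻¹.val * qM K N * polyPM K N Q.val :=
    ⟨θ (qM K N) - polyPM K N Q⁻¹.val * qM K N * polyPM K N Q.val, by abel⟩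
  obtain ⟨g, rfl⟩ := exists_polyPM_smul_one_eq_of_forall_commute
    (commute_polyPM_of_map_qM_eq_add_conj hc hQ)
  refine ⟨-g, Q, ?_, hQ⟩
  calc θ (qM K N) = polyPM K N (g • 1) + polyPM K N Q⁻¹.val * qM K N * polyPM K N Q.val := hc
    _ = polyPM K N (g • 1) + (qM K N + polyPM K N (Q⁻¹.val * Q.val.map derivative)) := by
        rw [polyPM_inv_mul_qM_mul_polyPM]
    _ = qM K N - polyPM K N (-g • 1 - Q⁻¹.val * Q.val.map derivative) := by
        rw [map_sub, neg_smul, map_neg]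
        abel

end Weyl

/-- Lemma 3.3.4(ii): an automorphism `θ` of `M_N(W)` with `θ(p) = p` restricts
to conjugation by an invertible `Q ∈ M_N(k[p])` on `M_N(k[p])` and satisfies
`θ(q) = q - B(p)` with `B = h(p)·Id - Q⁻¹·Q'`. -/
theorem automorphism_fixing_p_on_weyl [IsAlgClosed k] (N : ℕ) (hN : 0 < N)
    (θ : MW k N ≃ₐ[k] MW k N)
    (hp : θ (pM k N) = pM k N) :
    ∃ (h : Polynomial k) (Q Qinv : Matrix (Fin N) (Fin N) (Polynomial k)),
      Q * Qinv = 1 ∧ Qinv * Q = 1 ∧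
      θ (qM k N) = qM k N -
        ((h • (1 : Matrix (Fin N) (Fin N) (Polynomial k))
          - Qinv * Q.map (derivative : Polynomial k → Polynomial k))).map (polyP k) ∧
      (∀ B : Matrix (Fin N) (Fin N) (Polynomial k),
        θ (B.map (polyP k)) = (Qinv * B * Q).map (polyP k)) := by
  obtain ⟨h, Q, hq, hB⟩ := automorphism_fixing_p_on_weyl_general θ.toAlgHom hp
  exact ⟨h, Q.val, Q⁻¹.val, Q.mul_inv, Q.inv_mul, hq, hB⟩

end
end
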